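/- arXiv:2008.00753 — 8 statements merged into one kernel-verified Lean document; each statement's English description precedes it below -/
import Mathlib

section
/- Let G be a finite connected simple graph and t a vertex. Let W₁ be a walk from x₁ to t of length dist(x₁,t) and W₂ a walk from x₂ to t of length dist(x₂,t) (two geodesics ending at t). Suppose u,v are adjacent vertices such that both W₁ and W₂ traverse the edge {u,v}. Then W₁ and W₂ traverse {u,v} in the same direction: u occurs immediately before v in W₁ if and only if u occurs immediately before v in W₂. -/
/-!
Along a geodesic to `t`, each step lowers the distance to `t` by exactly one. So the direction in
which a geodesic to `t` traverses an edge is determined by the distances from the endpoints of the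
edge to `t`, which do not depend on the geodesic.
-/

section Geodesic

open SimpleGraph

variable {V : Type*} {G : SimpleGraph V} {x t : V} {p : G.Walk x t} {d : G.Dart}

theorem dist_fst_eq_dist_snd_add_one_of_mem_darts (hp : p.length = G.dist x t)
    (hd : d ∈ p.darts) : G.dist d.fst t = G.dist d.snd t + 1 := by
  induction p with
  | nil => simp at hd
  | cons hadj q ih =>
    have hq := length_eq_dist_of_subwalk hp (q.isSubwalk_cons hadj)
    rcases List.mem_cons.mp hd with rfl | hd
    · rw [← hp, ← hq, Walk.length_cons]
    · exact ih hq hd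

theorem mem_darts_iff_dist_fst_eq_dist_snd_add_one (hp : p.length = G.dist x t)
    (hd : d.edge ∈ p.edges) : d ∈ p.darts ↔ G.dist d.fst t = G.dist d.snd t + 1 := by
  refine ⟨dist_fst_eq_dist_snd_add_one_of_mem_darts hp, fun hdist ↦ ?_⟩
  obtain ⟨d', hd', hedge⟩ := List.mem_map.mp hd
  rcases (dart_edge_eq_iff d' d).mp hedge with rfl | rfl
  · exact hd'
  · have hdist_symm : G.dist d.snd t = G.dist d.fst t + 1 :=
      dist_fst_eq_dist_snd_add_one_of_mem_darts hp hd'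
    omega

end Geodesic

theorem stmt_3_general {V : Type*} (G : SimpleGraph V) (t x₁ x₂ u v : V)
    (W₁ : G.Walk x₁ t) (W₂ : G.Walk x₂ t)
    (h₁ : W₁.length = G.dist x₁ t) (h₂ : W₂.length = G.dist x₂ t)
    (he₁ : s(u, v) ∈ W₁.edges) (he₂ : s(u, v) ∈ W₂.edges) :
    ((∃ d ∈ W₁.darts, SimpleGraph.Dart.toProd d = (u, v)) ↔
      (∃ d ∈ W₂.darts, SimpleGraph.Dart.toProd d = (u, v))) := by
  refine exists_congr fun d ↦ and_congr_left fun hd ↦ ?_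
  have hedge : d.edge = s(u, v) := SimpleGraph.dart_edge_eq_mk'_iff.mpr (.inl hd)
  rw [mem_darts_iff_dist_fst_eq_dist_snd_add_one h₁ (hedge ▸ he₁),
    mem_darts_iff_dist_fst_eq_dist_snd_add_one h₂ (hedge ▸ he₂)]

/-- Two geodesic walks `W₁`, `W₂` ending at the same vertex `t` that both
traverse an edge `{u,v}` traverse it in the same direction: `u` occurs immediately
before `v` in `W₁` iff it does in `W₂`. -/
theorem stmt_3 {V : Type*} [Fintype V] (G : SimpleGraph V) (hG : G.Connected)
    (t x₁ x₂ u v : V) (huv : G.Adj u v)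
    (W₁ : G.Walk x₁ t) (W₂ : G.Walk x₂ t)
    (h₁ : W₁.length = G.dist x₁ t) (h₂ : W₂.length = G.dist x₂ t)
    (he₁ : s(u, v) ∈ W₁.edges) (he₂ : s(u, v) ∈ W₂.edges) :
    ((∃ d ∈ W₁.darts, SimpleGraph.Dart.toProd d = (u, v)) ↔
      (∃ d ∈ W₂.darts, SimpleGraph.Dart.toProd d = (u, v))) := by
  exact stmt_3_general G t x₁ x₂ u v W₁ W₂ h₁ h₂ he₁ he₂
end

section
/- Let G be a finite connected simple graph with vertex set V of size γ ≥ 2 and δ edges, and let g : V → ℕ satisfy: p_a := (∑_{v∈V} g(v)) + δ − γ + 1 ≥ 2, and every vertex v with g(v) = 0 has deg(v) ≥ 3. Define η(v) = (g(v) − 1 + deg(v)/2)/(p_a − 1). Then: (1) 0 < η(v) < 1 for every v and ∑_{v∈V} η(v) = 1 (so η is a polarization); (2) λ_η(v) := 1 − g(v) − η(v)·(1 − p_a) equals deg(v)/2 for every v; (3) for every depth-one datum (r,s,a,b) on G one has (∑_{v∈V} r(v)·λ_η(v)) − ∑_e s(e) = (1/2)·∑_e (a(e)+b(e)); in particular this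 quantity is ≥ 0, with equality if and only if a(e) = b(e) = 0 for every edge e. -/
open Finset

/-- A depth-one datum on a graph `G` (encoding a depth one sheaf on a nodal curve with
dual graph `G`): ranks `r` on vertices (components), and at each edge (node) `e` the
free rank `s e` of the stalk and torsion parts `a v e` attached to each endpoint `v`
of `e`, subject to the compatibility `r v = s e + a v e` for `v` an endpoint of `e`.
For an edge `e` with chosen endpoints `u_e, v_e`, the paper's `a(e)`, `b(e)` are
`a u_e e` and `a v_e e`. -/
structure DepthOneDatum {V : Type*} (G : SimpleGraph V) where
  r : V → ℕ
  s : Sym2 V → ℕ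
  a : V → Sym2 V → ℕ
  compat : ∀ e ∈ G.edgeSet, ∀ v ∈ e, r v = s e + a v e

variable {V : Type*} [Fintype V] [DecidableEq V]

/-- The defect `Δ = (∑ v, r v · λ v) − ∑ e, s e` of a depth-one datum
(equal to `Δ_w(E) = wdeg E − ∑ deg E_i` for the corresponding sheaf). -/
def DepthOneDatum.defect {G : SimpleGraph V} [DecidableRel G.Adj]
    (lam : V → ℚ) (D : DepthOneDatum G) : ℚ :=
  (∑ v : V, (D.r v : ℚ) * lam v) - ∑ e ∈ G.edgeFinset, (D.s e : ℚ)

/-- The residual rank `t_e = a(e) + b(e)` of a depth-one datum at an edge `e`. -/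
def DepthOneDatum.tRes {G : SimpleGraph V} (D : DepthOneDatum G) (e : Sym2 V) : ℚ :=
  Sym2.lift ⟨fun x y => (D.a x e : ℚ) + (D.a y e : ℚ), fun _ _ => add_comm _ _⟩ e

/-- A depth-one datum is locally free when all torsion parts `a`, `b` vanish at all edges. -/
def DepthOneDatum.LocFree {G : SimpleGraph V} (D : DepthOneDatum G) : Prop :=
  ∀ e ∈ G.edgeSet, ∀ v ∈ e, D.a v e = 0

/-- `N(B)`: the number of edges of `G` with both endpoints in `B`. -/
def insideCount (G : SimpleGraph V) [DecidableRel G.Adj] (B : Finset V) : ℕ :=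
  (G.edgeFinset.filter (fun e => e ∈ B.sym2)).card

/-- `δ_B`: the number of edges of `G` with exactly one endpoint in `B`. -/
def crossCount (G : SimpleGraph V) [DecidableRel G.Adj] (B : Finset V) : ℕ :=
  (G.edgeFinset.filter (fun e => e ∉ B.sym2 ∧ e ∉ Bᶜ.sym2)).card

/-- `Δ_w(O_B) = (∑_{v ∈ B} λ v) − N(B)`. -/
def DeltaO (G : SimpleGraph V) [DecidableRel G.Adj] (lam : V → ℚ) (B : Finset V) : ℚ :=
  (∑ v ∈ B, lam v) - (insideCount G B : ℚ)

/-!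
The canonical polarization is `η v = (deg ω_C|_v) / (deg ω_C)`, and its weight `λ_η v` is half the
number of nodes on the component `v`. Hence `∑ v, r v · λ_η v` distributes over the edges, each edge
`e = {u, v}` receiving `(r u + r v) / 2 = s e + (a u e + a v e) / 2`; after subtracting `∑ e, s e`,
only the torsion terms remain.
-/

section Sums

theorem lt_sum_of_forall_pos {ι M : Type*} [Fintype ι] [Nontrivial ι] [AddCommMonoid M]
    [PartialOrder M] [IsOrderedCancelAddMonoid M] {f : ι → M} (hf : ∀ i, 0 < f i) (i : ι) :
    f i < ∑ j, f j := by
  obtain ⟨j, hji⟩ := exists_ne i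
  exact single_lt_sum hji (mem_univ i) (mem_univ j) (hf j) fun k _ _ => (hf k).le

variable {W : Type*} [Fintype W]

theorem sum_ite_mem_sym2 [DecidableEq W] {M : Type*} [AddCommMonoid M] (f : W → M) {e : Sym2 W}
    (he : ¬ e.IsDiag) : (∑ v, if v ∈ e then f v else 0) = (e.map f).add := by
  induction e with
  | _ x y =>
    have endpoints : ({v | v ∈ s(x, y)} : Finset W) = {x, y} := by ext; simp
    rw [← sum_filter, endpoints, sum_pair he, Sym2.map_mk, Sym2.add_mk]

theorem sum_degree_nsmul_eq_sum_edgeFinset (G : SimpleGraph W) [DecidableRel G.Adj] {M : Type*}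
    [AddCommMonoid M] (f : W → M) :
    ∑ v, G.degree v • f v = ∑ e ∈ G.edgeFinset, (e.map f).add := by
  classical
  calc ∑ v, G.degree v • f v
      = ∑ v, ∑ e ∈ G.edgeFinset, if v ∈ e then f v else 0 := by
        refine sum_congr rfl fun v _ => ?_
        rw [← sum_filter, sum_const, ← G.incidenceFinset_eq_filter,
          G.card_incidenceFinset_eq_degree]
    _ = ∑ e ∈ G.edgeFinset, ∑ v, if v ∈ e then f v else 0 := sum_comm
    _ = ∑ e ∈ G.edgeFinset, (e.map f).add :=
        sum_congr rfl fun _ he => sum_ite_mem_sym2 f <|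
          G.not_isDiag_of_mem_edgeSet (G.mem_edgeFinset.mp he)

end Sums

namespace DepthOneDatum

variable {W : Type*} {G : SimpleGraph W} (D : DepthOneDatum G)

theorem tRes_mk (x y : W) : D.tRes s(x, y) = D.a x s(x, y) + D.a y s(x, y) := rfl

theorem tRes_nonneg (e : Sym2 W) : 0 ≤ D.tRes e := by
  induction e with
  | _ x y => exact add_nonneg (Nat.cast_nonneg _) (Nat.cast_nonneg _)

theorem tRes_eq_zero_iff (e : Sym2 W) : D.tRes e = 0 ↔ ∀ v ∈ e, D.a v e = 0 := by
  induction e with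
  | _ x y =>
    rw [Sym2.ball, tRes_mk]
    norm_cast
    exact Nat.add_eq_zero_iff

theorem add_map_r {e : Sym2 W} (he : e ∈ G.edgeSet) :
    (e.map fun v => (D.r v : ℚ)).add = 2 * D.s e + D.tRes e := by
  induction e with
  | _ x y =>
    rw [Sym2.map_mk, Sym2.add_mk, D.compat _ he x (Sym2.mem_mk_left x y),
      D.compat _ he y (Sym2.mem_mk_right x y), tRes_mk]
    push_cast
    ring

variable [Fintype W] [DecidableRel G.Adj]

theorem defect_degree_div_two :
    D.defect (fun v => (G.degree v : ℚ) / 2) = 1 / 2 * ∑ e ∈ G.edgeFinset, D.tRes e := by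
  have sum_ranks : ∑ v, (D.r v : ℚ) * (G.degree v / 2) =
      ∑ e ∈ G.edgeFinset, (D.s e : ℚ) + 1 / 2 * ∑ e ∈ G.edgeFinset, D.tRes e := by
    calc ∑ v, (D.r v : ℚ) * (G.degree v / 2)
        = 1 / 2 * ∑ v, G.degree v • (D.r v : ℚ) := by
          rw [mul_sum]
          refine sum_congr rfl fun v _ => ?_
          rw [nsmul_eq_mul]
          ring
      _ = 1 / 2 * ∑ e ∈ G.edgeFinset, (2 * (D.s e : ℚ) + D.tRes e) := by
          rw [sum_degree_nsmul_eq_sum_edgeFinset]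
          exact congrArg _ (sum_congr rfl fun _ he => D.add_map_r (G.mem_edgeFinset.mp he))
      _ = ∑ e ∈ G.edgeFinset, (D.s e : ℚ) + 1 / 2 * ∑ e ∈ G.edgeFinset, D.tRes e := by
          rw [sum_add_distrib, ← mul_sum]
          ring
  rw [defect, sum_ranks, add_sub_cancel_left]

theorem defect_degree_div_two_nonneg : 0 ≤ D.defect (fun v => (G.degree v : ℚ) / 2) := by
  rw [defect_degree_div_two]
  exact mul_nonneg one_half_pos.le (sum_nonneg fun e _ => D.tRes_nonneg e)

theorem defect_degree_div_two_eq_zero_iff :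
    D.defect (fun v => (G.degree v : ℚ) / 2) = 0 ↔ D.LocFree := by
  rw [defect_degree_div_two, mul_eq_zero_iff_left one_half_pos.ne',
    sum_eq_zero_iff_of_nonneg fun e _ => D.tRes_nonneg e]
  simp only [SimpleGraph.mem_edgeFinset, tRes_eq_zero_iff, LocFree]

end DepthOneDatum

section CanonicalDegree

variable {W : Type*} {G : SimpleGraph W}

/-- Half the degree `2 g v - 2 + deg v` of the dualizing sheaf `ω_C` on the component `v`. -/
def halfCanonicalDegree (G : SimpleGraph W) [G.LocallyFinite] (g : W → ℕ) (v : W) : ℚ :=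
  (g v : ℚ) - 1 + (G.degree v : ℚ) / 2

theorem halfCanonicalDegree_pos_iff [G.LocallyFinite] {g : W → ℕ} {v : W} :
    0 < halfCanonicalDegree G g v ↔ 2 < 2 * g v + G.degree v := by
  rw [halfCanonicalDegree, ← Nat.cast_lt (α := ℚ)]
  push_cast
  constructor <;> intro h <;> linarith

theorem sum_halfCanonicalDegree [Fintype W] [DecidableRel G.Adj] (g : W → ℕ) :
    ∑ v, halfCanonicalDegree G g v =
      ∑ v, (g v : ℚ) + (#G.edgeFinset : ℚ) - (Fintype.card W : ℚ) := by
  have handshake : ∑ v, (G.degree v : ℚ) = 2 * (#G.edgeFinset : ℚ) := by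
    exact_mod_cast G.sum_degrees_eq_twice_card_edges
  simp only [halfCanonicalDegree, sum_add_distrib, sum_sub_distrib, ← sum_div, handshake,
    sum_const, card_univ, nsmul_eq_mul, mul_one]
  ring

theorem two_lt_two_mul_add_degree [Nontrivial W] [G.LocallyFinite] (hG : G.Preconnected)
    {g : W → ℕ} (hstable : ∀ v, g v = 0 → 3 ≤ G.degree v) (v : W) :
    2 < 2 * g v + G.degree v := by
  have degree_pos := hG.degree_pos_of_nontrivial v
  have := hstable v
  omega

end CanonicalDegree

theorem stmt_7_general {W : Type*} [Fintype W] [Nontrivial W] (G : SimpleGraph W)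
    [DecidableRel G.Adj] (g : W → ℕ) (pa : ℚ)
    (hpa : pa = (∑ v, (g v : ℚ)) + (G.edgeFinset.card : ℚ) - (Fintype.card W : ℚ) + 1)
    (hample : ∀ v, 2 < 2 * g v + G.degree v)
    (η : W → ℚ)
    (hη : ∀ v, η v = ((g v : ℚ) - 1 + (G.degree v : ℚ) / 2) / (pa - 1)) :
    (∀ v, 0 < η v ∧ η v < 1) ∧ (∑ v, η v = 1)
    ∧ (∀ v, 1 - (g v : ℚ) - η v * (1 - pa) = (G.degree v : ℚ) / 2)
    ∧ (∀ D : DepthOneDatum G,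
        D.defect (fun v => 1 - (g v : ℚ) - η v * (1 - pa))
            = (1 / 2) * ∑ e ∈ G.edgeFinset, D.tRes e
        ∧ 0 ≤ D.defect (fun v => 1 - (g v : ℚ) - η v * (1 - pa))
        ∧ (D.defect (fun v => 1 - (g v : ℚ) - η v * (1 - pa)) = 0 ↔ D.LocFree)) := by
  have canonicalDegree_pos (v : W) : 0 < halfCanonicalDegree G g v :=
    halfCanonicalDegree_pos_iff.mpr (hample v)
  have sum_canonicalDegree : ∑ v, halfCanonicalDegree G g v = pa - 1 := by
    rw [sum_halfCanonicalDegree, hpa, add_sub_cancel_right]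
  have canonicalDegree_lt (v : W) : halfCanonicalDegree G g v < pa - 1 :=
    sum_canonicalDegree ▸ lt_sum_of_forall_pos canonicalDegree_pos v
  have pa_sub_one_pos : 0 < pa - 1 :=
    sum_canonicalDegree ▸ sum_pos (fun v _ => canonicalDegree_pos v) univ_nonempty
  have eta_eq (v : W) : η v = halfCanonicalDegree G g v / (pa - 1) := hη v
  have weight_eq (v : W) : 1 - (g v : ℚ) - η v * (1 - pa) = (G.degree v : ℚ) / 2 := by
    have : η v * (pa - 1) = (g v : ℚ) - 1 + G.degree v / 2 := by
      rw [hη, div_mul_cancel₀ _ pa_sub_one_pos.ne']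
    linarith
  refine ⟨fun v => ?_, ?_, weight_eq, fun D => ?_⟩
  · rw [eta_eq, div_lt_one pa_sub_one_pos]
    exact ⟨div_pos (canonicalDegree_pos v) pa_sub_one_pos, canonicalDegree_lt v⟩
  · simp only [eta_eq, ← sum_div, sum_canonicalDegree, div_self pa_sub_one_pos.ne']
  · simp only [weight_eq]
    exact ⟨D.defect_degree_div_two, D.defect_degree_div_two_nonneg,
      D.defect_degree_div_two_eq_zero_iff⟩

/-- the canonical polarization `η` of a stable dual graph is a polarization,
its `λ_η` equals `deg v / 2`, and every depth-one datum has defect `(1/2)·∑ t_e ≥ 0`,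
with equality iff the datum is locally free. -/
theorem stmt_7 (G : SimpleGraph V) [DecidableRel G.Adj]
    (hG : G.Connected) (hγ : 2 ≤ Fintype.card V)
    (g : V → ℕ) (pa : ℚ)
    (hpa : pa = (∑ v, (g v : ℚ)) + (G.edgeFinset.card : ℚ) - (Fintype.card V : ℚ) + 1)
    (hpa2 : 2 ≤ pa)
    (hstable : ∀ v, g v = 0 → 3 ≤ G.degree v)
    (η : V → ℚ)
    (hη : ∀ v, η v = ((g v : ℚ) - 1 + (G.degree v : ℚ) / 2) / (pa - 1)) :
    (∀ v, 0 < η v ∧ η v < 1) ∧ (∑ v, η v = 1)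
    ∧ (∀ v, 1 - (g v : ℚ) - η v * (1 - pa) = (G.degree v : ℚ) / 2)
    ∧ (∀ D : DepthOneDatum G,
        D.defect (fun v => 1 - (g v : ℚ) - η v * (1 - pa))
            = (1 / 2) * ∑ e ∈ G.edgeFinset, D.tRes e
        ∧ 0 ≤ D.defect (fun v => 1 - (g v : ℚ) - η v * (1 - pa))
        ∧ (D.defect (fun v => 1 - (g v : ℚ) - η v * (1 - pa)) = 0 ↔ D.LocFree)) := by
  have : Nontrivial V := Fintype.one_lt_card_iff_nontrivial.mp hγ
  exact stmt_7_general G g pa hpa (two_lt_two_mul_add_degree hG.preconnected hstable) η hη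
end

section
/- Let G be a finite connected simple graph, t a fixed vertex, and suppose given a system of minimal paths to t: for each vertex v a path p(v) from v to t of length dist(v,t), such that whenever a vertex u lies on p(v), the portion of p(v) from u to t equals p(u). For an edge e let A_e = { v ∈ V : e is an edge of p(v) }. Then for every edge e with A_e ≠ ∅: (a) t ∉ A_e (so A_e is a proper subset of V) and the subgraph induced on A_e is connected; (b) the subgraph induced on V ∖ A_e is connected. -/
/-!
Walks to `t` that are compatible under restriction are the branches of a tree rooted at `t`. If an
edge `s(r, w)` occurs on some branch, with `r` farther from the root, then the branches containing
it are exactly those through `r`. The vertices below `r` are joined to `r` along their branches, and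
the remaining ones are joined to `t` along theirs.
-/

section

open SimpleGraph

variable {V : Type*} {G : SimpleGraph V} {r t u v w : V}

theorem induce_connected_of_forall_exists_walk {S : Set V} (hr : r ∈ S)
    (hS : ∀ v ∈ S, ∃ q : G.Walk v r, ∀ u ∈ q.support, u ∈ S) : (G.induce S).Connected := by
  refine induce_connected_of_patches r hr fun {v} hv => ?_
  obtain ⟨q, hq⟩ := hS v hv
  exact ⟨{u | u ∈ q.support}, hq, q.end_mem_support, q.start_mem_support,
    q.connected_induce_support.preconnected _ _⟩

/-- The vertices whose walk to the root `t` passes through `r`; for a coherent family, the subtree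
below `r`, including `r` itself. -/
def descendants (p : ∀ v, G.Walk v t) (r : V) : Set V :=
  {v | r ∈ (p v).support}

variable [DecidableEq V]

/-- A family of walks to a common root `t` is *coherent* if, whenever `u` lies on the walk from `v`,
the walk from `u` is the rest of the walk from `v`. Since `dropUntil` cuts at the first visit, this
forces the walks to be paths; they need not be shortest ones. -/
def CoherentWalks (p : ∀ v, G.Walk v t) : Prop :=
  ∀ (v u : V) (h : u ∈ (p v).support), (p v).dropUntil u h = p u

namespace CoherentWalks

variable {p : ∀ v, G.Walk v t}

theorem eq_of_eq_cons (hp : CoherentWalks p) {h : G.Adj v w} {q : G.Walk w t}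
    (hv : p v = .cons h q) : q = p w := by
  have hw : w ∈ (p v).support := by simp [hv]
  rw [← hp v w hw]
  simp [hv, Walk.dropUntil, h.ne, Walk.dropUntil_first]

theorem root_eq_nil (hp : CoherentWalks p) : p t = .nil := by
  cases ht : p t with
  | nil => rfl
  | @cons _ w _ h q =>
    have hlt : (p w).length < (p t).length := by simp [ht, hp.eq_of_eq_cons ht]
    have hle : (p t).length ≤ (p w).length := by
      simpa only [hp w t (p w).end_mem_support] using
        (p w).length_dropUntil_le_length (p w).end_mem_support
    exact absurd hle hlt.not_ge

theorem induction (hp : CoherentWalks p) {motive : V → Prop} (root : motive t)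
    (step : ∀ v w (h : G.Adj v w), p v = .cons h (p w) → motive w → motive v) (v : V) :
    motive v := by
  cases hv : p v with
  | nil => exact root
  | @cons _ w _ h q =>
    obtain rfl := hp.eq_of_eq_cons hv
    exact step v w h hv (hp.induction root step w)
termination_by (p v).length
decreasing_by simp [hv]

theorem exists_eq_cons_of_mem_edges (hp : CoherentWalks p) {e : Sym2 V} (he : e ∈ (p v).edges) :
    ∃ r w, ∃ h : G.Adj r w, p r = .cons h (p w) ∧ e = s(r, w) := by
  induction v using hp.induction with
  | root => simp [hp.root_eq_nil] at he
  | step v w h hv ih =>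
    rw [hv, Walk.edges_cons, List.mem_cons] at he
    exact he.elim (fun he => ⟨v, w, h, hv, he⟩) ih

theorem setOf_mem_edges_eq_descendants (hp : CoherentWalks p) {h : G.Adj r w}
    (hr : p r = .cons h (p w)) : {v | s(r, w) ∈ (p v).edges} = descendants p r := by
  ext v
  refine ⟨(p v).fst_mem_support_of_mem_edges, fun hv => ?_⟩
  apply (p v).edges_dropUntil_subset_edges hv
  simp [hp v r hv, hr]

theorem root_mem_descendants_iff (hp : CoherentWalks p) : t ∈ descendants p r ↔ r = t := by
  simp [descendants, hp.root_eq_nil]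

theorem connected_induce_descendants (hp : CoherentWalks p) (r : V) :
    (G.induce (descendants p r)).Connected := by
  refine induce_connected_of_forall_exists_walk (p r).start_mem_support fun v hv => ?_
  induction v using hp.induction with
  | root =>
    obtain rfl := hp.root_mem_descendants_iff.1 hv
    exact ⟨.nil, by simpa using hv⟩
  | step v w h hpv ih =>
    obtain rfl | hrw : r = v ∨ w ∈ descendants p r := by simpa [descendants, hpv] using hv
    · exact ⟨.nil, by simpa using hv⟩
    · obtain ⟨q, hq⟩ := ih hrw
      exact ⟨.cons h q, by simpa using ⟨hv, hq⟩⟩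

theorem connected_induce_compl_descendants (hp : CoherentWalks p) (hr : r ≠ t) :
    (G.induce (descendants p r)ᶜ).Connected := by
  refine induce_connected_of_forall_exists_walk (mt hp.root_mem_descendants_iff.1 hr)
    fun v hv => ⟨p v, fun u hu hru => hv ?_⟩
  apply (p v).support_dropUntil_subset_support hu
  rwa [hp v u hu]

end CoherentWalks

theorem stmt_9_general {p : ∀ v, G.Walk v t} (hp : CoherentWalks p) {e : Sym2 V}
    (hne : {v | e ∈ (p v).edges}.Nonempty) :
    t ∉ {v | e ∈ (p v).edges}
    ∧ (G.induce {v | e ∈ (p v).edges}).Connected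
    ∧ (G.induce {v | e ∈ (p v).edges}ᶜ).Connected := by
  obtain ⟨v, hv⟩ := hne
  obtain ⟨r, w, h, hr, rfl⟩ := hp.exists_eq_cons_of_mem_edges hv
  have hrt : r ≠ t := by
    rintro rfl
    simp [hp.root_eq_nil] at hr
  rw [hp.setOf_mem_edges_eq_descendants hr]
  exact ⟨mt hp.root_mem_descendants_iff.1 hrt, hp.connected_induce_descendants r,
    hp.connected_induce_compl_descendants hrt⟩

end

/-- given a system of minimal paths `p` to `t` (each `p v` is a geodesic
walk from `v` to `t`, compatible under restriction), for every edge `e` the set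
`A_e = {v | e lies on p v}`, if nonempty, does not contain `t`, induces a connected
subgraph, and its complement induces a connected subgraph. -/
theorem stmt_9 {V : Type*} [Fintype V] [DecidableEq V] (G : SimpleGraph V)
    (hG : G.Connected) (t : V) (p : ∀ v : V, G.Walk v t)
    (hmin : ∀ v, (p v).length = G.dist v t)
    (hres : ∀ (v u : V) (h : u ∈ (p v).support), (p v).dropUntil u h = p u)
    (e : Sym2 V) (hne : {v : V | e ∈ (p v).edges}.Nonempty) :
    t ∉ {v : V | e ∈ (p v).edges}
    ∧ (G.induce {v : V | e ∈ (p v).edges}).Connected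
    ∧ (G.induce ({v : V | e ∈ (p v).edges}ᶜ)).Connected :=
  stmt_9_general hres hne
end

section
/- Let G be a finite connected simple graph with vertex set V of size γ ≥ 2 and δ edges, g : V → ℕ, w : V → ℚ with 0 < w(v) < 1 and ∑ w(v) = 1; set p_a = (∑ g(v)) + δ − γ + 1, λ(v) = 1 − g(v) − w(v)·(1 − p_a), and Δ_w(O_B) = (∑_{v∈B} λ(v)) − N(B) for B ⊆ V. Fix a vertex t and a system of minimal paths p to t; let A_e = { v : e is an edge of p(v) } and M' = { e : A_e ≠ ∅ }. For e ∈ M' write its endpoints as u_e, v_e with dist(u_e,t) = dist(v_e,t) + 1 (this is well defined). Let (r,s,a,b) be a depth-one datum on G whose orientation at each e ∈ M' attaches a(e) to u_e and b(e) to v_e. Then (∑_{v∈V} r(v)·λ(v)) − ∑_e s(e) = ∑_{e∈M'} [ a(e)·( (1 − δ_{A_e})/2 + Δ_w(O_{A_e}) ) + b(e)·( (1 + δ_{A_e})/2 − Δ_w(O_{A_e}) ) ] + (1/2)·∑_{e∉M'} (a(e) + b(e)). -/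
open Finset

variable {V : Type*} [Fintype V] [DecidableEq V]

/-!
Charge every edge half to each of its endpoints: with `μ v = λ v - deg v / 2`, handshaking gives
`∑_{v ∈ B} μ v = Δ_w(O_B) - δ_B / 2` and `defect = ∑ v, r v * μ v + ½ ∑ e, t_e`. The formula for
`p_a` amounts to `∑ v, λ v = δ`, that is, `μ` has total mass zero; so `r v` may be replaced by
`r v - r t`, which telescopes along `p v` into the differences `r (u_e) - r (v_e) = a(e) - b(e)`.
Exchanging the sums over `v` and `e` collects, at each edge, the mass `∑_{v ∈ A_e} μ v`.
-/

section Walk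

variable {W : Type*} {G : SimpleGraph W} {u t : W}

theorem sum_map_darts_sub {M : Type*} [AddCommGroup M] (f : W → M) (q : G.Walk u t) :
    (q.darts.map fun d => f d.fst - f d.snd).sum = f u - f t := by
  induction q with
  | nil => simp
  | cons h q ih => simp [ih]

theorem sum_toFinset_edges_sub [DecidableEq W] {M : Type*} [AddCommGroup M] (f : W → M)
    {uE vE : Sym2 W → W} {q : G.Walk u t} (hq : q.IsTrail)
    (horient : ∀ d ∈ q.darts, d.toProd = (uE d.edge, vE d.edge)) :
    ∑ e ∈ q.edges.toFinset, (f (uE e) - f (vE e)) = f u - f t := by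
  rw [List.sum_toFinset _ hq.edges_nodup, SimpleGraph.Walk.edges, List.map_map,
    ← sum_map_darts_sub f q]
  refine congrArg List.sum (List.map_congr_left fun d hd => ?_)
  rw [Function.comp_apply, horient d hd]

theorem dist_fst_eq_dist_snd_add_one (q : G.Walk u t) (hq : q.length = G.dist u t) :
    ∀ d ∈ q.darts, G.dist d.fst t = G.dist d.snd t + 1 := by
  induction q with
  | nil => simp
  | @cons x y t h q ih =>
    rw [SimpleGraph.Walk.length_cons] at hq
    obtain ⟨q', hq'⟩ := q.reachable.exists_walk_length_eq_dist
    have hx : G.dist x t ≤ G.dist y t + 1 := by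
      simpa [hq'] using SimpleGraph.dist_le (q'.cons h)
    have hy : q.length = G.dist y t := by
      have := SimpleGraph.dist_le q
      lia
    simpa [← hq, hy] using ih hy

theorem toProd_eq_of_dist {x y : W} {d : G.Dart} (hd : G.dist d.fst t = G.dist d.snd t + 1)
    (he : d.edge = s(x, y)) (hxy : G.dist x t = G.dist y t + 1) : d.toProd = (x, y) := by
  rcases SimpleGraph.dart_edge_eq_mk'_iff.1 he with h | h
  · exact h
  · simp only [h] at hd
    lia

end Walk

section PathSums

variable {G : SimpleGraph V} [DecidableRel G.Adj] {R : Type*} {t : V} {p : ∀ v, G.Walk v t}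
  {A : Sym2 V → Finset V}

theorem sum_mul_sum_eq_sum_sum_edges_mul [NonUnitalNonAssocSemiring R]
    (hA : ∀ e v, v ∈ A e ↔ e ∈ (p v).edges) (h : Sym2 V → R) (m : V → R) :
    ∑ e ∈ G.edgeFinset with (A e).Nonempty, h e * ∑ v ∈ A e, m v
      = ∑ v, (∑ e ∈ (p v).edges.toFinset, h e) * m v := by
  simp only [mul_sum, sum_mul]
  refine sum_comm' fun e v => ?_
  simp only [mem_filter, mem_univ, and_true, List.mem_toFinset, hA, SimpleGraph.mem_edgeFinset]
  exact ⟨And.right, fun he => ⟨⟨(p v).edges_subset_edgeSet he, v, (hA e v).2 he⟩, he⟩⟩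

omit [DecidableEq V] in
theorem sum_sub_mul_sum_eq [NonUnitalNonAssocRing R] (hp : ∀ v, (p v).IsTrail)
    (hA : ∀ e v, v ∈ A e ↔ e ∈ (p v).edges) {uE vE : Sym2 V → V}
    (horient : ∀ v, ∀ d ∈ (p v).darts, d.toProd = (uE d.edge, vE d.edge)) (f m : V → R) :
    ∑ e ∈ G.edgeFinset with (A e).Nonempty, (f (uE e) - f (vE e)) * ∑ v ∈ A e, m v
      = ∑ v, (f v - f t) * m v := by
  classical
  rw [sum_mul_sum_eq_sum_sum_edges_mul hA]
  exact sum_congr rfl fun v _ => by rw [sum_toFinset_edges_sub f (hp v) (horient v)]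

end PathSums

section Handshaking

variable (G : SimpleGraph V) [DecidableRel G.Adj]

theorem sum_edgeFinset_sum_toFinset {M : Type*} [AddCommMonoid M] (f : V → M) :
    ∑ e ∈ G.edgeFinset, ∑ v ∈ e.toFinset, f v = ∑ v, G.degree v • f v := by
  rw [sum_comm' (t' := univ) (s' := fun v => G.incidenceFinset v)]
  · simp only [sum_const, SimpleGraph.card_incidenceFinset_eq_degree]
  · simp [SimpleGraph.incidenceFinset_eq_filter]

theorem card_toFinset_inter_of_not_isDiag {e : Sym2 V} (he : ¬ e.IsDiag) (B : Finset V) :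
    #(e.toFinset ∩ B)
      = 2 * (if e ∈ B.sym2 then 1 else 0) + if e ∉ B.sym2 ∧ e ∉ Bᶜ.sym2 then 1 else 0 := by
  induction e with
  | _ x y =>
    have hxy : x ≠ y := he
    by_cases hx : x ∈ B <;> by_cases hy : y ∈ B <;>
      simp [Sym2.toFinset_mk_eq, insert_inter_of_mem, insert_inter_of_notMem, hx, hy, hxy]

theorem sum_degree_eq_two_mul_insideCount_add_crossCount (B : Finset V) :
    ∑ v ∈ B, G.degree v = 2 * insideCount G B + crossCount G B := by
  calc ∑ v ∈ B, G.degree v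
      = ∑ e ∈ G.edgeFinset, #(e.toFinset ∩ B) := by
        simpa using (sum_edgeFinset_sum_toFinset G fun v => if v ∈ B then (1 : ℕ) else 0).symm
    _ = _ := by
        rw [insideCount, crossCount, card_filter, card_filter, mul_sum, ← sum_add_distrib]
        exact sum_congr rfl fun e he => card_toFinset_inter_of_not_isDiag
          (G.not_isDiag_of_mem_edgeSet (SimpleGraph.mem_edgeFinset.1 he)) B

/-- The weight `μ v = λ v - deg v / 2`, obtained from `λ` by charging each edge half to each of its
endpoints. Unlike `Δ_w(O_B)`, the quantity `Δ_w(O_B) - δ_B / 2` is additive in `B`, and `μ` is its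
density. -/
def balancedWeight (lam : V → ℚ) (v : V) : ℚ := lam v - G.degree v / 2

theorem sum_balancedWeight (lam : V → ℚ) (B : Finset V) :
    ∑ v ∈ B, balancedWeight G lam v = DeltaO G lam B - crossCount G B / 2 := by
  have hdeg : ∑ v ∈ B, (G.degree v : ℚ) = 2 * insideCount G B + crossCount G B :=
    mod_cast sum_degree_eq_two_mul_insideCount_add_crossCount G B
  simp only [balancedWeight, DeltaO, sum_sub_distrib, ← sum_div, hdeg]
  ring

omit [DecidableEq V] in
theorem sum_univ_balancedWeight_eq_zero {lam : V → ℚ} (hlam : ∑ v, lam v = #G.edgeFinset) :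
    ∑ v, balancedWeight G lam v = 0 := by
  have hdeg : ∑ v, (G.degree v : ℚ) = 2 * #G.edgeFinset :=
    mod_cast G.sum_degrees_eq_twice_card_edges
  simp only [balancedWeight, sum_sub_distrib, ← sum_div, hlam, hdeg]
  ring

end Handshaking

omit [DecidableEq V] in
theorem sum_one_sub_sub_mul_eq {K : Type*} [CommRing K] {g w : V → K} (hw : ∑ v, w v = 1)
    {n pa : K} (hpa : pa = ∑ v, g v + n - Fintype.card V + 1) :
    ∑ v, (1 - g v - w v * (1 - pa)) = n := by
  simp only [sum_sub_distrib, ← sum_mul, hw, hpa, sum_const, card_univ, nsmul_eq_mul]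
  ring

namespace DepthOneDatum

section

variable {W : Type*} {G : SimpleGraph W} (D : DepthOneDatum G) {e : Sym2 W} {x y : W}

theorem tRes_of_eq_mk (he : e = s(x, y)) : D.tRes e = D.a x e + D.a y e := by
  subst he
  rfl

theorem a_eq_r_sub_s (he : e ∈ G.edgeSet) (hx : x ∈ e) : (D.a x e : ℚ) = D.r x - D.s e := by
  simp [D.compat e he x hx]

theorem a_sub_a (he : e ∈ G.edgeSet) (hxy : e = s(x, y)) :
    (D.a x e : ℚ) - D.a y e = D.r x - D.r y := by
  rw [D.a_eq_r_sub_s he (hxy ▸ Sym2.mem_mk_left x y),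
    D.a_eq_r_sub_s he (hxy ▸ Sym2.mem_mk_right x y)]
  ring

theorem tRes_eq_sum_r_sub [DecidableEq W] (he : e ∈ G.edgeSet) :
    D.tRes e = ∑ v ∈ e.toFinset, (D.r v : ℚ) - 2 * D.s e := by
  induction e with
  | _ x y =>
    have hxy : x ≠ y := SimpleGraph.Adj.ne he
    rw [D.tRes_of_eq_mk rfl, D.a_eq_r_sub_s he (Sym2.mem_mk_left x y),
      D.a_eq_r_sub_s he (Sym2.mem_mk_right x y), Sym2.toFinset_mk_eq, sum_pair hxy]
    ring

end

omit [DecidableEq V] in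
theorem defect_eq_sum_balancedWeight {G : SimpleGraph V} [DecidableRel G.Adj] (D : DepthOneDatum G)
    (lam : V → ℚ) :
    D.defect lam
      = ∑ v, (D.r v : ℚ) * balancedWeight G lam v + 1 / 2 * ∑ e ∈ G.edgeFinset, D.tRes e := by
  classical
  have htRes : ∑ e ∈ G.edgeFinset, D.tRes e
      = ∑ v, (G.degree v : ℚ) * D.r v - 2 * ∑ e ∈ G.edgeFinset, (D.s e : ℚ) := by
    rw [sum_congr rfl fun e he => D.tRes_eq_sum_r_sub (SimpleGraph.mem_edgeFinset.1 he),
      sum_sub_distrib, sum_edgeFinset_sum_toFinset, ← mul_sum]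
    simp only [nsmul_eq_mul]
  have hr : ∑ v, (D.r v : ℚ) * balancedWeight G lam v
      = ∑ v, (D.r v : ℚ) * lam v - 1 / 2 * ∑ v, (G.degree v : ℚ) * D.r v := by
    rw [mul_sum, ← sum_sub_distrib]
    exact sum_congr rfl fun v _ => by rw [balancedWeight]; ring
  rw [defect, htRes, hr]
  ring

theorem a_mul_add_a_mul_eq {G : SimpleGraph V} [DecidableRel G.Adj] (D : DepthOneDatum G)
    {e : Sym2 V} (he : e ∈ G.edgeSet) {x y : V} (hxy : e = s(x, y)) (lam : V → ℚ) (B : Finset V) :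
    D.a x e * ((1 - crossCount G B) / 2 + DeltaO G lam B)
        + D.a y e * ((1 + crossCount G B) / 2 - DeltaO G lam B)
      = ((D.r x : ℚ) - D.r y) * ∑ v ∈ B, balancedWeight G lam v + 1 / 2 * D.tRes e := by
  rw [sum_balancedWeight, ← D.a_sub_a he hxy, D.tRes_of_eq_mk hxy]
  ring

end DepthOneDatum

theorem stmt_10_general (G : SimpleGraph V) [DecidableRel G.Adj]
    (lam : V → ℚ) (hlam : ∑ v, lam v = #G.edgeFinset)
    (t : V) (p : ∀ v : V, G.Walk v t) (hp : ∀ v, (p v).IsTrail)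
    (A : Sym2 V → Finset V) (hA : ∀ e v, v ∈ A e ↔ e ∈ (p v).edges)
    (uE vE : Sym2 V → V)
    (horient : ∀ v, ∀ d ∈ (p v).darts, d.toProd = (uE d.edge, vE d.edge))
    (D : DepthOneDatum G) :
    D.defect lam
      = (∑ e ∈ G.edgeFinset with (A e).Nonempty,
          ((D.a (uE e) e : ℚ) * ((1 - (crossCount G (A e) : ℚ)) / 2 + DeltaO G lam (A e))
            + (D.a (vE e) e : ℚ) *
              ((1 + (crossCount G (A e) : ℚ)) / 2 - DeltaO G lam (A e))))
        + (1 / 2) * ∑ e ∈ G.edgeFinset with ¬ (A e).Nonempty, D.tRes e := by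
  have hends {e : Sym2 V} (he : (A e).Nonempty) : e = s(uE e, vE e) := by
    obtain ⟨v, hv⟩ := he
    obtain ⟨d, hd, rfl⟩ := List.mem_map.1 ((hA e v).1 hv)
    exact SimpleGraph.dart_edge_eq_mk'_iff.2 (.inl (horient v d hd))
  have hshift : ∑ v, ((D.r v : ℚ) - D.r t) * balancedWeight G lam v
      = ∑ v, (D.r v : ℚ) * balancedWeight G lam v := by
    simp only [sub_mul, sum_sub_distrib, ← mul_sum, sum_univ_balancedWeight_eq_zero G hlam,
      mul_zero, sub_zero]
  calc D.defect lam
      = ∑ v, (D.r v : ℚ) * balancedWeight G lam v + 1 / 2 * ∑ e ∈ G.edgeFinset, D.tRes e :=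
        D.defect_eq_sum_balancedWeight lam
    _ = ∑ e ∈ G.edgeFinset with (A e).Nonempty,
            ((D.r (uE e) : ℚ) - D.r (vE e)) * ∑ v ∈ A e, balancedWeight G lam v
          + 1 / 2 * ∑ e ∈ G.edgeFinset, D.tRes e := by
        rw [← hshift, sum_sub_mul_sum_eq hp hA horient (fun v => (D.r v : ℚ))]
    _ = ∑ e ∈ G.edgeFinset with (A e).Nonempty,
            (((D.r (uE e) : ℚ) - D.r (vE e)) * ∑ v ∈ A e, balancedWeight G lam v
              + 1 / 2 * D.tRes e)
          + 1 / 2 * ∑ e ∈ G.edgeFinset with ¬ (A e).Nonempty, D.tRes e := by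
        rw [sum_add_distrib, ← mul_sum, add_assoc, ← mul_add, sum_filter_add_sum_filter_not]
    _ = _ := by
        congr 1
        refine sum_congr rfl fun e he => ?_
        obtain ⟨heG, heA⟩ := mem_filter.1 he
        rw [D.a_mul_add_a_mul_eq (SimpleGraph.mem_edgeFinset.1 heG) (hends heA)]

/-- the general formula of Theorem 3.7 for the defect of a depth-one
datum in terms of the subcurves `A_e` attached to a system of minimal paths to `t`,
where at each edge `e` with `A_e ≠ ∅` the endpoint `u_e` is the one farther from `t`
(`dist u_e t = dist v_e t + 1`) and carries `a(e) = D.a (uE e) e`,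
`b(e) = D.a (vE e) e`. -/
theorem stmt_10 (G : SimpleGraph V) [DecidableRel G.Adj]
    (hG : G.Connected) (hγ : 2 ≤ Fintype.card V)
    (g : V → ℕ) (w : V → ℚ) (hw : ∀ v, 0 < w v ∧ w v < 1) (hwsum : ∑ v, w v = 1)
    (pa : ℚ)
    (hpa : pa = (∑ v, (g v : ℚ)) + (G.edgeFinset.card : ℚ) - (Fintype.card V : ℚ) + 1)
    (lam : V → ℚ) (hlam : ∀ v, lam v = 1 - (g v : ℚ) - w v * (1 - pa))
    (t : V) (p : ∀ v : V, G.Walk v t)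
    (hmin : ∀ v, (p v).length = G.dist v t)
    (hres : ∀ (v u : V) (h : u ∈ (p v).support), (p v).dropUntil u h = p u)
    (A : Sym2 V → Finset V) (hA : ∀ e v, v ∈ A e ↔ e ∈ (p v).edges)
    (uE vE : Sym2 V → V)
    (hends : ∀ e ∈ G.edgeFinset, (A e).Nonempty →
      e = s(uE e, vE e) ∧ G.dist (uE e) t = G.dist (vE e) t + 1)
    (D : DepthOneDatum G) :
    D.defect lam
      = (∑ e ∈ G.edgeFinset.filter (fun e => (A e).Nonempty),
          ((D.a (uE e) e : ℚ) * ((1 - (crossCount G (A e) : ℚ)) / 2 + DeltaO G lam (A e))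
            + (D.a (vE e) e : ℚ) *
              ((1 + (crossCount G (A e) : ℚ)) / 2 - DeltaO G lam (A e))))
        + (1 / 2) * ∑ e ∈ G.edgeFinset.filter (fun e => ¬ (A e).Nonempty), D.tRes e := by
  refine stmt_10_general G lam ?_ t p (fun v => ((p v).isPath_of_length_eq_dist (hmin v)).isTrail)
    A hA uE vE (fun v d hd => ?_) D
  · simpa only [hlam] using sum_one_sub_sub_mul_eq hwsum hpa
  · have hedge : d.edge ∈ (p v).edges := List.mem_map_of_mem hd
    obtain ⟨he, hdist⟩ := hends d.edge (by simp) ⟨v, (hA _ v).2 hedge⟩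
    exact toProd_eq_of_dist (dist_fst_eq_dist_snd_add_one (p v) (hmin v) d hd) he hdist
end

section
/- Let T be a finite tree (connected acyclic simple graph) with vertex set V of size γ ≥ 2 (so with δ = γ − 1 edges), g : V → ℕ, w : V → ℚ with 0 < w(v) < 1 and ∑ w(v) = 1; set p_a = (∑ g(v)) + δ − γ + 1, λ(v) = 1 − g(v) − w(v)·(1 − p_a), and Δ_w(O_B) = (∑_{v∈B} λ(v)) − N(B) for B ⊆ V. Fix a root vertex t; for each edge e let A_e be the vertex set of the connected component of T minus e not containing t, with endpoints u_e ∈ A_e and v_e ∉ A_e. Then δ_{A_e} = 1 for every edge e, and for every depth-one datum (r,s,a,b) on T whose orientation at each edge e attaches a(e) to u_e and b(e) to v_e, one has (∑_{v∈V} r(v)·λ(v)) − ∑_e s(e) = ∑_e [ a(e)·Δ_w(O_{A_e}) + b(e)·(1 − Δ_w(O_{A_e})) ]. -/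
open Finset

variable {V : Type*} [Fintype V] [DecidableEq V]

/-!
Call `v e` the head and `u e` the tail of the edge `e`, and subtract from `λ` the number of edges
with head at a given vertex. Since `∑ λ` is the number of edges, the difference `μ` has total
mass `0`. An edge lies inside `A e` exactly when its head does, so the `μ`-mass of `A e` is
`Δ(O_{A e})`. On a connected graph the rank function `r` is, up to an additive constant, the
combination of the indicators of the cuts `A e` with coefficients `r (u e) - r (v e)`; pairing
with `μ` kills the constant, so `∑ r μ = ∑ₑ (r (u e) - r (v e)) Δ(O_{A e})`. The defect is this
sum plus `∑ₑ (r (v e) - s e)`, and compatibility rewrites it in terms of `a` and `b`.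

Complementing `A e` while exchanging `u e` and `v e` turns `Δ(O_{A e})` into `1 - Δ(O_{A e})`, so
either side of each edge may serve as `A e`.
-/

/-- A system of oriented fundamental cuts of `G`: each edge `e` is oriented from `u e` to `v e`
and is the only edge crossing the vertex set `A e`, which it leaves. On a tree, `A e` is the
component of `u e` after deleting `e`; values away from the edges of `G` are irrelevant. -/
structure IsFundamentalCutSystem {V : Type*} (G : SimpleGraph V) (A : Sym2 V → Finset V)
    (u v : Sym2 V → V) : Prop where
  mk_eq : ∀ e ∈ G.edgeSet, s(u e, v e) = e
  tail_mem : ∀ e ∈ G.edgeSet, u e ∈ A e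
  head_notMem : ∀ e ∈ G.edgeSet, v e ∉ A e
  mem_iff_mem : ∀ e ∈ G.edgeSet, ∀ f ∈ G.edgeSet, f ≠ e → (u f ∈ A e ↔ v f ∈ A e)

theorem isFundamentalCutSystem_of_mem_iff_not_reachable {V : Type*} {G : SimpleGraph V}
    {A : Sym2 V → Finset V} {u v : Sym2 V → V} {t : V}
    (hA : ∀ e ∈ G.edgeSet, ∀ x, x ∈ A e ↔ ¬ (G.deleteEdges {e}).Reachable x t)
    (hends : ∀ e ∈ G.edgeSet, e = s(u e, v e) ∧ u e ∈ A e ∧ v e ∉ A e) :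
    IsFundamentalCutSystem G A u v where
  mk_eq e he := (hends e he).1.symm
  tail_mem e he := (hends e he).2.1
  head_notMem e he := (hends e he).2.2
  mem_iff_mem e he f hf hfe := by
    have hadj : (G.deleteEdges {e}).Adj (u f) (v f) := by
      rw [← SimpleGraph.mem_edgeSet, ← (hends f hf).1, SimpleGraph.edgeSet_deleteEdges]
      exact ⟨hf, hfe⟩
    rw [hA e he, hA e he, not_iff_not]
    exact ⟨hadj.symm.reachable.trans, hadj.reachable.trans⟩

theorem apply_eq_of_reachable {V M : Type*} {G : SimpleGraph V} {φ : V → M}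
    (hφ : ∀ x y, G.Adj x y → φ x = φ y) {x y : V} (hxy : G.Reachable x y) : φ x = φ y := by
  obtain ⟨p⟩ := hxy
  induction p with
  | nil => rfl
  | cons hadj _ ih => exact (hφ _ _ hadj).trans ih

namespace IsFundamentalCutSystem

section

variable {V : Type*} {G : SimpleGraph V} {A : Sym2 V → Finset V} {u v : Sym2 V → V}

theorem tail_mem_edge (h : IsFundamentalCutSystem G A u v) {e : Sym2 V} (he : e ∈ G.edgeSet) :
    u e ∈ e :=
  Sym2.mem_iff_exists.2 ⟨v e, (h.mk_eq e he).symm⟩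

theorem head_mem_edge (h : IsFundamentalCutSystem G A u v) {e : Sym2 V} (he : e ∈ G.edgeSet) :
    v e ∈ e :=
  Sym2.mem_iff_exists.2 ⟨u e, (h.mk_eq e he).symm.trans Sym2.eq_swap⟩

theorem mem_sym2_iff (h : IsFundamentalCutSystem G A u v) {e : Sym2 V} (he : e ∈ G.edgeSet)
    (B : Finset V) : e ∈ B.sym2 ↔ u e ∈ B ∧ v e ∈ B := by
  rw [← mk_mem_sym2_iff, h.mk_eq e he]

end

variable {G : SimpleGraph V} [DecidableRel G.Adj] {A : Sym2 V → Finset V} {u v : Sym2 V → V}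

theorem crossCount_eq_one (h : IsFundamentalCutSystem G A u v) {e : Sym2 V}
    (he : e ∈ G.edgeSet) : crossCount G (A e) = 1 := by
  refine card_eq_one.2 ⟨e, ?_⟩
  ext f
  simp only [mem_filter, SimpleGraph.mem_edgeFinset, mem_singleton]
  constructor
  · rintro ⟨hf, hin, hout⟩
    by_contra hfe
    have := h.mem_iff_mem e he f hf hfe
    simp only [h.mem_sym2_iff hf, mem_compl] at hin hout
    tauto
  · rintro rfl
    simp [h.mem_sym2_iff he, he, h.tail_mem f he, h.head_notMem f he]

theorem insideCount_eq_card_head_mem (h : IsFundamentalCutSystem G A u v) {e : Sym2 V}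
    (he : e ∈ G.edgeSet) : insideCount G (A e) = #{f ∈ G.edgeFinset | v f ∈ A e} := by
  refine congrArg card (filter_congr fun f hf => ?_)
  rw [SimpleGraph.mem_edgeFinset] at hf
  rw [h.mem_sym2_iff hf, and_iff_right_iff_imp]
  intro hvf
  obtain rfl | hfe := eq_or_ne f e
  · exact h.tail_mem f he
  · exact (h.mem_iff_mem e he f hf hfe).2 hvf

theorem filter_tail_mem_eq_insert (h : IsFundamentalCutSystem G A u v) {e : Sym2 V}
    (he : e ∈ G.edgeSet) :
    {f ∈ G.edgeFinset | u e ∈ A f} = insert e {f ∈ G.edgeFinset | v e ∈ A f} := by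
  ext f
  simp only [mem_filter, SimpleGraph.mem_edgeFinset, mem_insert]
  obtain rfl | hfe := eq_or_ne f e
  · simp [he, h.tail_mem f he]
  · simp only [hfe, false_or]
    exact and_congr_right fun hf => h.mem_iff_mem f hf e he hfe.symm

theorem sum_filter_tail_mem {M : Type*} [AddCommMonoid M] (h : IsFundamentalCutSystem G A u v)
    {e : Sym2 V} (he : e ∈ G.edgeSet) (d : Sym2 V → M) :
    ∑ f ∈ G.edgeFinset with u e ∈ A f, d f = d e + ∑ f ∈ G.edgeFinset with v e ∈ A f, d f := by
  rw [h.filter_tail_mem_eq_insert he, sum_insert (by simp [h.head_notMem e he])]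

theorem exists_eq_add_sum_cuts {M : Type*} [AddCommGroup M]
    (h : IsFundamentalCutSystem G A u v) (hG : G.Connected) (ρ : V → M) :
    ∃ c, ∀ x, ρ x = c + ∑ e ∈ G.edgeFinset with x ∈ A e, (ρ (u e) - ρ (v e)) := by
  let φ (x : V) : M := ρ x - ∑ e ∈ G.edgeFinset with x ∈ A e, (ρ (u e) - ρ (v e))
  have φ_ends : ∀ e ∈ G.edgeSet, φ (u e) = φ (v e) := fun e he => by
    simp only [φ, h.sum_filter_tail_mem he]
    abel
  have φ_adj : ∀ x y, G.Adj x y → φ x = φ y := fun x y hxy => by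
    have hφ := φ_ends s(x, y) hxy
    obtain ⟨hu, hv⟩ | ⟨hu, hv⟩ := Sym2.eq_iff.1 (h.mk_eq s(x, y) hxy)
    · rwa [hu, hv] at hφ
    · rw [hu, hv] at hφ
      exact hφ.symm
  obtain ⟨t⟩ := hG.nonempty
  refine ⟨φ t, fun x => sub_eq_iff_eq_add.1 ?_⟩
  exact apply_eq_of_reachable φ_adj (hG.preconnected x t)

theorem sum_mul_eq_sum_cuts {V R : Type*} [Fintype V] [Ring R] {G : SimpleGraph V}
    [DecidableRel G.Adj] {A : Sym2 V → Finset V} {u v : Sym2 V → V}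
    (h : IsFundamentalCutSystem G A u v) (hG : G.Connected) (ρ : V → R) {μ : V → R}
    (hμ : ∑ x, μ x = 0) :
    ∑ x, ρ x * μ x = ∑ e ∈ G.edgeFinset, (ρ (u e) - ρ (v e)) * ∑ x ∈ A e, μ x := by
  classical
  obtain ⟨c, hc⟩ := h.exists_eq_add_sum_cuts hG ρ
  calc ∑ x, ρ x * μ x
      = ∑ x, (c + ∑ e ∈ G.edgeFinset with x ∈ A e, (ρ (u e) - ρ (v e))) * μ x :=
        sum_congr rfl fun x _ => congrArg (· * μ x) (hc x)
    _ = ∑ x, ∑ e ∈ G.edgeFinset with x ∈ A e, (ρ (u e) - ρ (v e)) * μ x := by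
        simp only [add_mul, sum_add_distrib, ← mul_sum, hμ, mul_zero, zero_add, sum_mul]
    _ = ∑ e ∈ G.edgeFinset, ∑ x ∈ A e, (ρ (u e) - ρ (v e)) * μ x :=
        sum_comm' (by simp [and_comm])
    _ = ∑ e ∈ G.edgeFinset, (ρ (u e) - ρ (v e)) * ∑ x ∈ A e, μ x := by
        simp only [mul_sum]

end IsFundamentalCutSystem

section Defect

variable {G : SimpleGraph V} [DecidableRel G.Adj] {A : Sym2 V → Finset V} {u v : Sym2 V → V}

/-- The number of edges of `G` whose head, for the orientation with heads `v`, is `x`;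
subtracting it from `λ` gives a weight of total mass zero. -/
def inDegree (G : SimpleGraph V) [DecidableRel G.Adj] (v : Sym2 V → V) (x : V) : ℕ :=
  #{e ∈ G.edgeFinset | v e = x}

theorem sum_inDegree (G : SimpleGraph V) [DecidableRel G.Adj] (v : Sym2 V → V) (B : Finset V) :
    ∑ x ∈ B, inDegree G v x = #{e ∈ G.edgeFinset | v e ∈ B} :=
  sum_card_fiberwise_eq_card_filter _ _ _

theorem sum_mul_inDegree {R : Type*} [NonAssocSemiring R] (G : SimpleGraph V)
    [DecidableRel G.Adj] (v : Sym2 V → V) (ρ : V → R) :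
    ∑ x, ρ x * inDegree G v x = ∑ e ∈ G.edgeFinset, ρ (v e) := by
  simp only [← sum_fiberwise' G.edgeFinset v ρ, inDegree, sum_const, nsmul_eq_mul,
    Nat.cast_comm]

theorem IsFundamentalCutSystem.deltaO_eq_sum_sub_inDegree (h : IsFundamentalCutSystem G A u v)
    {e : Sym2 V} (he : e ∈ G.edgeSet) (lam : V → ℚ) :
    DeltaO G lam (A e) = ∑ x ∈ A e, (lam x - inDegree G v x) := by
  rw [DeltaO, h.insideCount_eq_card_head_mem he, ← sum_inDegree, Nat.cast_sum, sum_sub_distrib]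

theorem sum_sub_inDegree_eq_zero {R : Type*} [Ring R] {lam : V → R}
    (hlam : ∑ x, lam x = #G.edgeFinset) (v : Sym2 V → V) :
    ∑ x, (lam x - inDegree G v x) = 0 := by
  rw [sum_sub_distrib, hlam, ← Nat.cast_sum, sum_inDegree]
  simp

theorem DepthOneDatum.defect_eq_sum_sub_inDegree_add (D : DepthOneDatum G) (lam : V → ℚ)
    (v : Sym2 V → V) :
    D.defect lam = ∑ x, (D.r x : ℚ) * (lam x - inDegree G v x)
      + ∑ e ∈ G.edgeFinset, ((D.r (v e) : ℚ) - D.s e) := by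
  simp only [DepthOneDatum.defect, mul_sub, sum_sub_distrib, sum_mul_inDegree]
  ring

theorem DepthOneDatum.torsion_eq_rank_sub {V : Type*} {G : SimpleGraph V} (D : DepthOneDatum G)
    {e : Sym2 V} (he : e ∈ G.edgeSet) {x : V} (hx : x ∈ e) :
    (D.a x e : ℚ) = D.r x - D.s e := by
  rw [D.compat e he x hx]
  push_cast
  ring

theorem IsFundamentalCutSystem.defect_eq_sum (h : IsFundamentalCutSystem G A u v)
    (hG : G.Connected) {lam : V → ℚ} (hlam : ∑ x, lam x = #G.edgeFinset)
    (D : DepthOneDatum G) :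
    D.defect lam = ∑ e ∈ G.edgeFinset,
      ((D.a (u e) e : ℚ) * DeltaO G lam (A e)
        + (D.a (v e) e : ℚ) * (1 - DeltaO G lam (A e))) := by
  rw [D.defect_eq_sum_sub_inDegree_add lam v,
    h.sum_mul_eq_sum_cuts hG _ (sum_sub_inDegree_eq_zero hlam v), ← sum_add_distrib]
  refine sum_congr rfl fun e he => ?_
  rw [SimpleGraph.mem_edgeFinset] at he
  rw [← h.deltaO_eq_sum_sub_inDegree he, D.torsion_eq_rank_sub he (h.tail_mem_edge he),
    D.torsion_eq_rank_sub he (h.head_mem_edge he)]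
  ring

end Defect

theorem sum_one_sub_genus_sub_weight {V R : Type*} [Fintype V] [Ring R] {g w : V → R} {pa m : R}
    (hw : ∑ x, w x = 1) (hpa : pa = ∑ x, g x + m - Fintype.card V + 1) :
    ∑ x, (1 - g x - w x * (1 - pa)) = m := by
  simp only [sum_sub_distrib, ← sum_mul, hw, hpa, sum_const, card_univ, nsmul_one, one_mul]
  abel

theorem stmt_12_general {G : SimpleGraph V} [DecidableRel G.Adj] (hG : G.Connected)
    {lam : V → ℚ} (hlam : ∑ x, lam x = #G.edgeFinset)
    {A : Sym2 V → Finset V} {u v : Sym2 V → V} (h : IsFundamentalCutSystem G A u v) :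
    (∀ e ∈ G.edgeFinset, crossCount G (A e) = 1)
    ∧ ∀ D : DepthOneDatum G,
        D.defect lam
          = ∑ e ∈ G.edgeFinset,
              ((D.a (u e) e : ℚ) * DeltaO G lam (A e)
                + (D.a (v e) e : ℚ) * (1 - DeltaO G lam (A e))) :=
  ⟨fun _ he => h.crossCount_eq_one (SimpleGraph.mem_edgeFinset.1 he), h.defect_eq_sum hG hlam⟩

/-- on a tree `T` with root `t`, where `A_e` is the vertex set of the
connected component of `T` minus the edge `e` not containing `t` (with endpoints
`u_e ∈ A_e`, `v_e ∉ A_e`), one has `δ_{A_e} = 1` for every edge, and every depth-one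
datum has defect `∑_e (a(e)·Δ_w(O_{A_e}) + b(e)·(1 − Δ_w(O_{A_e})))`. -/
theorem stmt_12 (T : SimpleGraph V) [DecidableRel T.Adj]
    (hT : T.IsTree) (hγ : 2 ≤ Fintype.card V)
    (g : V → ℕ) (w : V → ℚ) (hw : ∀ v, 0 < w v ∧ w v < 1) (hwsum : ∑ v, w v = 1)
    (pa : ℚ)
    (hpa : pa = (∑ v, (g v : ℚ)) + (T.edgeFinset.card : ℚ) - (Fintype.card V : ℚ) + 1)
    (lam : V → ℚ) (hlam : ∀ v, lam v = 1 - (g v : ℚ) - w v * (1 - pa))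
    (t : V) (A : Sym2 V → Finset V)
    (hA : ∀ e ∈ T.edgeFinset, ∀ v : V,
      v ∈ A e ↔ ¬ (T.deleteEdges {e}).Reachable v t)
    (uE vE : Sym2 V → V)
    (hends : ∀ e ∈ T.edgeFinset, e = s(uE e, vE e) ∧ uE e ∈ A e ∧ vE e ∉ A e) :
    (∀ e ∈ T.edgeFinset, crossCount T (A e) = 1)
    ∧ ∀ D : DepthOneDatum T,
        D.defect lam
          = ∑ e ∈ T.edgeFinset,
              ((D.a (uE e) e : ℚ) * DeltaO T lam (A e)
                + (D.a (vE e) e : ℚ) * (1 - DeltaO T lam (A e))) := by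
  simp only [SimpleGraph.mem_edgeFinset] at hA hends
  exact stmt_12_general hT.connected
    (by simpa only [hlam] using sum_one_sub_genus_sub_weight hwsum hpa)
    (isFundamentalCutSystem_of_mem_iff_not_reachable hA hends)
end

section
/- Let T be a finite tree (connected acyclic simple graph) with vertex set V of size γ ≥ 2 and δ = γ − 1 edges, g : V → ℕ, and w : V → ℚ with 0 < w(v) < 1 and ∑ w(v) = 1; set p_a = (∑ g(v)) + δ − γ + 1, λ(v) = 1 − g(v) − w(v)·(1 − p_a), and Δ_w(O_B) = (∑_{v∈B} λ(v)) − N(B) for B ⊆ V. Then the following are equivalent: (i) for every nonempty proper subset B ⊆ V whose induced subgraph is connected, 0 < Δ_w(O_B) < δ_B; (ii) every depth-one datum (r,s,a,b) on T has defect Δ = (∑_{v∈V} r(v)·λ(v)) − ∑_e s(e) ≥ 0, with Δ = 0 if and only if a(e) = b(e) = 0 for every edge e. -/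
open Finset

variable {V : Type*} [Fintype V] [DecidableEq V]

/-!
Slice the ranks of a depth-one datum into their superlevel sets `B_k = {v | k < r v}`. Since `r v`
counts the `k` with `v ∈ B_k`, and `min (r u) (r v)` counts those with `u, v ∈ B_k`,
`Δ(E) = ∑_k Δ_w(O_{B_k}) + ∑_e (min (r u_e) (r v_e) - s e)`,
where the second sum has nonnegative terms. As `Δ_w(O_B)` is additive over the connected components
of `B` and vanishes for `B = V`, stability makes the first sum nonnegative too, with vanishing
exactly when `r` is constant. Conversely, `Δ_w(O_B)` is itself the defect of a datum, the indicator
of `B`, and the upper bound `Δ_w(O_B) < δ_B` is the lower bound for the complement of `B`.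
-/

section InducedSubgraphs

variable {G : SimpleGraph V}

omit [DecidableEq V] in
lemma exists_adj_of_nonempty_of_ne_univ (hG : G.Preconnected) {B : Finset V}
    (hB : B.Nonempty) (hB' : B ≠ univ) : ∃ u ∈ B, ∃ v ∉ B, G.Adj u v := by
  obtain ⟨x, hx⟩ := hB
  obtain ⟨y, hy⟩ : ∃ y, y ∉ B := by simpa [eq_univ_iff_forall] using hB'
  obtain ⟨p⟩ := hG x y
  obtain ⟨d, -, hfst, hsnd⟩ := p.exists_boundary_dart (B : Set V) hx hy
  exact ⟨d.fst, hfst, d.snd, hsnd, d.adj⟩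

omit [Fintype V] in
lemma exists_ssubset_forall_not_adj_of_not_connected {B : Finset V} (hB : B.Nonempty)
    (hconn : ¬ (G.induce (B : Set V)).Connected) :
    ∃ A ⊂ B, A.Nonempty ∧ ∀ u ∈ A, ∀ v ∈ B \ A, ¬ G.Adj u v := by
  classical
  obtain ⟨x, hx⟩ := hB
  obtain ⟨y, hxy⟩ : ∃ y, ¬ (G.induce (B : Set V)).Reachable ⟨x, hx⟩ y := by
    by_contra! h
    exact hconn (SimpleGraph.connected_iff_exists_forall_reachable _ |>.2 ⟨_, h⟩)
  let A := B.filter fun v => ∃ hv : v ∈ B, (G.induce (B : Set V)).Reachable ⟨x, hx⟩ ⟨v, hv⟩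
  refine ⟨A, filter_ssubset.2 ⟨y, y.2, fun ⟨_, hy⟩ => hxy hy⟩, ⟨x, ?_⟩, ?_⟩
  · exact mem_filter.2 ⟨hx, hx, .rfl⟩
  · intro u hu v hv huv
    obtain ⟨-, huB, hxu⟩ := mem_filter.1 hu
    obtain ⟨hvB, hvA⟩ := mem_sdiff.1 hv
    have huv' : (G.induce (B : Set V)).Adj ⟨u, huB⟩ ⟨v, hvB⟩ := huv
    exact hvA (mem_filter.2 ⟨hvB, hvB, hxu.trans huv'.reachable⟩)

end InducedSubgraphs

section DeltaO

variable (G : SimpleGraph V) [DecidableRel G.Adj] (lam : V → ℚ)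

lemma DeltaO_empty : DeltaO G lam ∅ = 0 := by
  simp [DeltaO, insideCount]

lemma DeltaO_univ : DeltaO G lam univ = ∑ v, lam v - #G.edgeFinset := by
  simp [DeltaO, insideCount]

lemma card_edgeFinset_eq_insideCount_add_crossCount (B : Finset V) :
    #G.edgeFinset = insideCount G B + insideCount G Bᶜ + crossCount G B := by
  rw [insideCount, insideCount, crossCount, card_eq_sum_ones, card_filter, card_filter, card_filter,
    ← sum_add_distrib, ← sum_add_distrib]
  refine sum_congr rfl fun e _ => ?_
  induction e with
  | _ u v => by_cases hu : u ∈ B <;> by_cases hv : v ∈ B <;> simp [hu, hv]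

lemma DeltaO_add_DeltaO_compl (B : Finset V) :
    DeltaO G lam B + DeltaO G lam Bᶜ = DeltaO G lam univ + crossCount G B := by
  have hcard : (#G.edgeFinset : ℚ) = insideCount G B + insideCount G Bᶜ + crossCount G B :=
    mod_cast card_edgeFinset_eq_insideCount_add_crossCount G B
  have hsum := sum_add_sum_compl B lam
  rw [DeltaO_univ, DeltaO, DeltaO]
  linarith

variable {G}

lemma insideCount_union {A B : Finset V} (hdisj : Disjoint A B)
    (hadj : ∀ u ∈ A, ∀ v ∈ B, ¬ G.Adj u v) :
    insideCount G (A ∪ B) = insideCount G A + insideCount G B := by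
  simp only [insideCount, card_filter, ← sum_add_distrib]
  refine sum_congr rfl fun e he => ?_
  induction e with
  | _ u v =>
    have huv : G.Adj u v := by simpa using he
    have hmixed : ¬ (u ∈ A ∧ v ∈ B) := fun h => hadj u h.1 v h.2 huv
    have hmixed' : ¬ (v ∈ A ∧ u ∈ B) := fun h => hadj v h.1 u h.2 huv.symm
    have hdisj' : ∀ x ∈ A, x ∉ B := fun _ hx => disjoint_left.1 hdisj hx
    simp only [mk_mem_sym2_iff, mem_union]
    grind

lemma DeltaO_union {A B : Finset V} (hdisj : Disjoint A B)
    (hadj : ∀ u ∈ A, ∀ v ∈ B, ¬ G.Adj u v) :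
    DeltaO G lam (A ∪ B) = DeltaO G lam A + DeltaO G lam B := by
  simp only [DeltaO, sum_union hdisj, insideCount_union hdisj hadj, Nat.cast_add]
  ring

variable {lam}

lemma DeltaO_pos_of_forall_connected {B : Finset V} (hB : B.Nonempty)
    (hpos : ∀ A ⊆ B, A.Nonempty → (G.induce (A : Set V)).Connected → 0 < DeltaO G lam A) :
    0 < DeltaO G lam B := by
  induction B using Finset.strongInduction with
  | H B ih =>
    by_cases hconn : (G.induce (B : Set V)).Connected
    · exact hpos B Subset.rfl hB hconn
    · obtain ⟨A, hAB, hA, hadj⟩ := exists_ssubset_forall_not_adj_of_not_connected hB hconn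
      have hposA := ih A hAB hA fun C hC => hpos C (hC.trans hAB.subset)
      have hposBA := ih (B \ A) (sdiff_ssubset hAB.subset hA) (sdiff_nonempty.2 hAB.not_subset)
        fun C hC => hpos C (hC.trans sdiff_subset)
      rw [← union_sdiff_of_subset hAB.subset, DeltaO_union lam disjoint_sdiff hadj]
      exact add_pos hposA hposBA

theorem forall_connected_DeltaO_iff_forall_DeltaO_pos (huniv : DeltaO G lam univ = 0) :
    (∀ B : Finset V, B.Nonempty → B ≠ univ → (G.induce (B : Set V)).Connected →
        0 < DeltaO G lam B ∧ DeltaO G lam B < crossCount G B) ↔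
      ∀ B : Finset V, B.Nonempty → B ≠ univ → 0 < DeltaO G lam B := by
  constructor
  · intro hstable B hB hB'
    refine DeltaO_pos_of_forall_connected hB fun A hAB hA hconn => (hstable A hA ?_ hconn).1
    rintro rfl
    exact hB' (univ_subset_iff.1 hAB)
  · intro hpos B hB hB' _
    have hcompl : 0 < DeltaO G lam Bᶜ :=
      hpos Bᶜ (by rwa [← compl_ne_univ_iff_nonempty, compl_compl])
        ((compl_ne_univ_iff_nonempty B).2 hB)
    have hadd := DeltaO_add_DeltaO_compl G lam B
    exact ⟨hpos B hB hB', by linarith⟩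

lemma DeltaO_eq_zero_iff (huniv : DeltaO G lam univ = 0)
    (hpos : ∀ B : Finset V, B.Nonempty → B ≠ univ → 0 < DeltaO G lam B) (B : Finset V) :
    DeltaO G lam B = 0 ↔ B = ∅ ∨ B = univ := by
  refine ⟨fun h => ?_, ?_⟩
  · by_contra! hB
    exact (hpos B hB.1 hB.2).ne' h
  · rintro (rfl | rfl)
    exacts [DeltaO_empty G lam, huniv]

lemma DeltaO_nonneg (huniv : DeltaO G lam univ = 0)
    (hpos : ∀ B : Finset V, B.Nonempty → B ≠ univ → 0 < DeltaO G lam B) (B : Finset V) :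
    0 ≤ DeltaO G lam B := by
  by_cases hB : B = ∅ ∨ B = univ
  · exact ((DeltaO_eq_zero_iff huniv hpos B).2 hB).ge
  · push Not at hB
    exact (hpos B hB.1 hB.2).le

end DeltaO

section Superlevel

/-- The superlevel set `{v | k < r v}` of a rank function `r`. -/
def superlevel (r : V → ℕ) (k : ℕ) : Finset V := {v | k < r v}

omit [DecidableEq V] in
lemma mem_superlevel {r : V → ℕ} {k : ℕ} {v : V} : v ∈ superlevel r k ↔ k < r v := by
  simp [superlevel]

omit [DecidableEq V] in
lemma mem_sym2_superlevel {r : V → ℕ} {k : ℕ} {e : Sym2 V} :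
    e ∈ (superlevel r k).sym2 ↔ k < (e.map r).inf := by
  induction e with
  | _ u v => simp [mem_superlevel]

lemma sum_range_ite_lt {m n : ℕ} (h : m ≤ n) :
    ∑ k ∈ range n, (if k < m then 1 else 0 : ℚ) = m := by
  have hfilter : (range n).filter (· < m) = range m := by grind
  rw [sum_boole, hfilter, card_range]

variable (G : SimpleGraph V) [DecidableRel G.Adj] (lam : V → ℚ)

lemma sum_range_DeltaO_superlevel {r : V → ℕ} {n : ℕ} (hr : ∀ v, r v ≤ n) :
    ∑ k ∈ range n, DeltaO G lam (superlevel r k) =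
      ∑ v, (r v : ℚ) * lam v - ∑ e ∈ G.edgeFinset, ((e.map r).inf : ℚ) := by
  have hvertices : ∑ k ∈ range n, ∑ v ∈ superlevel r k, lam v = ∑ v, (r v : ℚ) * lam v := by
    simp only [superlevel, sum_filter]
    rw [sum_comm]
    refine sum_congr rfl fun v _ => ?_
    simp only [← sum_range_ite_lt (hr v), sum_mul, ite_mul, one_mul, zero_mul]
  have hedges : ∑ k ∈ range n, (insideCount G (superlevel r k) : ℚ) =
      ∑ e ∈ G.edgeFinset, ((e.map r).inf : ℚ) := by
    simp only [insideCount, mem_sym2_superlevel, ← sum_boole]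
    rw [sum_comm]
    refine sum_congr rfl fun e _ => sum_range_ite_lt ?_
    induction e with
    | _ u v => exact inf_le_left.trans (hr u)
  simp only [DeltaO, sum_sub_distrib, hvertices, hedges]

end Superlevel

namespace DepthOneDatum

variable {G : SimpleGraph V}

section Superlevel

variable (D : DepthOneDatum G)

omit [Fintype V] [DecidableEq V] in
lemma s_le_inf_map_r {e : Sym2 V} (he : e ∈ G.edgeSet) : D.s e ≤ (e.map D.r).inf := by
  have hcompat := D.compat e he
  induction e with
  | _ u v =>
    have hu := hcompat u (Sym2.mem_mk_left u v)
    have hv := hcompat v (Sym2.mem_mk_right u v)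
    simp only [Sym2.map_mk, Sym2.inf_mk, le_inf_iff]
    omega

lemma defect_eq_sum_DeltaO_superlevel_add [DecidableRel G.Adj] (lam : V → ℚ) {n : ℕ}
    (hn : ∀ v, D.r v ≤ n) :
    D.defect lam = ∑ k ∈ range n, DeltaO G lam (superlevel D.r k) +
      ∑ e ∈ G.edgeFinset, (((e.map D.r).inf : ℚ) - D.s e) := by
  rw [sum_range_DeltaO_superlevel G lam hn, sum_sub_distrib, defect]
  ring

omit [DecidableEq V] in
lemma locFree_iff (hG : G.Preconnected) {n : ℕ} (hn : ∀ v, D.r v ≤ n) :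
    D.LocFree ↔ (∀ k ∈ range n, superlevel D.r k = ∅ ∨ superlevel D.r k = univ) ∧
      ∀ e ∈ G.edgeSet, (e.map D.r).inf = D.s e := by
  constructor
  · intro hfree
    have hr : ∀ e ∈ G.edgeSet, ∀ v ∈ e, D.r v = D.s e := fun e he v hv => by
      rw [D.compat e he v hv, hfree e he v hv, add_zero]
    refine ⟨fun k _ => ?_, fun e he => ?_⟩
    · by_contra! hk
      obtain ⟨u, hu, v, hv, huv⟩ := exists_adj_of_nonempty_of_ne_univ hG hk.1 hk.2
      have hruv : D.r u = D.r v :=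
        (hr s(u, v) huv u (by simp)).trans (hr s(u, v) huv v (by simp)).symm
      rw [mem_superlevel] at hu hv
      exact hv (hruv ▸ hu)
    · have hre := hr e he
      induction e with
      | _ u v => simp [hre u (by simp), hre v (by simp)]
  · rintro ⟨hlevel, hs⟩ e he v hv
    have hle : D.r v ≤ (e.map D.r).inf := by
      by_contra! hlt
      have hmem : v ∈ superlevel D.r (e.map D.r).inf := mem_superlevel.2 hlt
      have huniv := (hlevel _ (mem_range.2 (hlt.trans_le (hn v)))).resolve_left
        (ne_empty_of_mem hmem)
      have hself : e ∈ (superlevel D.r (e.map D.r).inf).sym2 := by simp [huniv]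
      exact (mem_sym2_superlevel.1 hself).false
    have hcompat := D.compat e he v hv
    have hinf := hs e he
    omega

theorem defect_nonneg_and_eq_zero_iff_locFree [DecidableRel G.Adj] (hG : G.Preconnected)
    {lam : V → ℚ} (huniv : DeltaO G lam univ = 0)
    (hpos : ∀ B : Finset V, B.Nonempty → B ≠ univ → 0 < DeltaO G lam B) :
    0 ≤ D.defect lam ∧ (D.defect lam = 0 ↔ D.LocFree) := by
  have hn : ∀ v, D.r v ≤ univ.sup D.r := fun v => le_sup (mem_univ v)
  have hlevels : ∀ k ∈ range (univ.sup D.r), 0 ≤ DeltaO G lam (superlevel D.r k) :=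
    fun k _ => DeltaO_nonneg huniv hpos _
  have hedges : ∀ e ∈ G.edgeFinset, 0 ≤ ((e.map D.r).inf : ℚ) - D.s e := fun e he =>
    sub_nonneg.2 (mod_cast D.s_le_inf_map_r (SimpleGraph.mem_edgeFinset.1 he))
  rw [D.defect_eq_sum_DeltaO_superlevel_add lam hn]
  refine ⟨add_nonneg (sum_nonneg hlevels) (sum_nonneg hedges), ?_⟩
  rw [add_eq_zero_iff_of_nonneg (sum_nonneg hlevels) (sum_nonneg hedges),
    sum_eq_zero_iff_of_nonneg hlevels, sum_eq_zero_iff_of_nonneg hedges, D.locFree_iff hG hn]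
  simp only [DeltaO_eq_zero_iff huniv hpos, sub_eq_zero, Nat.cast_inj, SimpleGraph.mem_edgeFinset]

end Superlevel

section Indicator

/-- The depth-one datum of the structure sheaf `O_B` of the subcurve with components `B`: rank one
on `B` and zero elsewhere. The subtraction in `a` never truncates at an endpoint `v` of `e`, because
`e ∈ B.sym2` forces `v ∈ B`. -/
def indicator (G : SimpleGraph V) (B : Finset V) : DepthOneDatum G where
  r v := if v ∈ B then 1 else 0
  s e := if e ∈ B.sym2 then 1 else 0
  a v e := (if v ∈ B then 1 else 0) - (if e ∈ B.sym2 then 1 else 0)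
  compat e _ v hv := by
    by_cases he : e ∈ B.sym2
    · simp [he, mem_sym2_iff.1 he v hv]
    · simp [he]

lemma defect_indicator [DecidableRel G.Adj] (lam : V → ℚ) (B : Finset V) :
    (indicator G B).defect lam = DeltaO G lam B := by
  simp [defect, indicator, DeltaO, insideCount]

omit [Fintype V] in
lemma not_locFree_indicator {B : Finset V} {u v : V} (huv : G.Adj u v) (hu : u ∈ B) (hv : v ∉ B) :
    ¬ (indicator G B).LocFree := by
  intro hfree
  simpa [indicator, hu, hv] using hfree s(u, v) huv u (Sym2.mem_mk_left u v)

end Indicator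

theorem forall_defect_iff_forall_DeltaO_pos [DecidableRel G.Adj] (hG : G.Preconnected)
    {lam : V → ℚ} (huniv : DeltaO G lam univ = 0) :
    (∀ D : DepthOneDatum G, 0 ≤ D.defect lam ∧ (D.defect lam = 0 ↔ D.LocFree)) ↔
      ∀ B : Finset V, B.Nonempty → B ≠ univ → 0 < DeltaO G lam B := by
  refine ⟨fun hgood B hB hB' => ?_, fun hpos D =>
    D.defect_nonneg_and_eq_zero_iff_locFree hG huniv hpos⟩
  obtain ⟨u, hu, v, hv, huv⟩ := exists_adj_of_nonempty_of_ne_univ hG hB hB'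
  obtain ⟨hnonneg, hzero⟩ := hgood (indicator G B)
  rw [← defect_indicator]
  exact hnonneg.lt_of_ne fun h => not_locFree_indicator huv hu hv (hzero.1 h.symm)

end DepthOneDatum

theorem stmt_13_general {G : SimpleGraph V} [DecidableRel G.Adj] (hG : G.Preconnected)
    {lam : V → ℚ} (hlam : ∑ v, lam v = #G.edgeFinset) :
    (∀ B : Finset V, B.Nonempty → B ≠ univ → (G.induce (B : Set V)).Connected →
        0 < DeltaO G lam B ∧ DeltaO G lam B < crossCount G B) ↔
      ∀ D : DepthOneDatum G, 0 ≤ D.defect lam ∧ (D.defect lam = 0 ↔ D.LocFree) := by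
  have huniv : DeltaO G lam univ = 0 := by rw [DeltaO_univ, hlam, sub_self]
  exact (forall_connected_DeltaO_iff_forall_DeltaO_pos huniv).trans
    (DepthOneDatum.forall_defect_iff_forall_DeltaO_pos hG huniv).symm

/-- on a tree `T`, the stability condition `0 < Δ_w(O_B) < δ_B` for all
nonempty proper connected `B` is equivalent to `w` being numerically good (every
depth-one datum has nonnegative defect, zero iff locally free). -/
theorem stmt_13 (T : SimpleGraph V) [DecidableRel T.Adj]
    (hT : T.IsTree) (hγ : 2 ≤ Fintype.card V)
    (g : V → ℕ) (w : V → ℚ) (hw : ∀ v, 0 < w v ∧ w v < 1) (hwsum : ∑ v, w v = 1)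
    (pa : ℚ)
    (hpa : pa = (∑ v, (g v : ℚ)) + (T.edgeFinset.card : ℚ) - (Fintype.card V : ℚ) + 1)
    (lam : V → ℚ) (hlam : ∀ v, lam v = 1 - (g v : ℚ) - w v * (1 - pa)) :
    (∀ B : Finset V, B.Nonempty → B ≠ Finset.univ →
        (T.induce (B : Set V)).Connected →
        0 < DeltaO T lam B ∧ DeltaO T lam B < (crossCount T B : ℚ))
    ↔ (∀ D : DepthOneDatum T,
        0 ≤ D.defect lam ∧ (D.defect lam = 0 ↔ D.LocFree)) := by
  have hsum : ∑ v, lam v = #T.edgeFinset := by simp [hlam, sum_sub_distrib, ← sum_mul, hwsum, hpa]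
  exact stmt_13_general hT.connected.preconnected hsum
end

section
/- Let T be a finite tree (connected acyclic simple graph) with vertex set V of size γ ≥ 2 and δ = γ − 1 edges, let g ≡ 0 (so p_a = 0), and let w : V → ℚ be any function with 0 < w(v) < 1 and ∑ w(v) = 1. Set λ(v) = 1 − w(v). Then every depth-one datum (r,s,a,b) on T has defect Δ = (∑_{v∈V} r(v)·λ(v)) − ∑_e s(e) ≥ 0, with Δ = 0 if and only if a(e) = b(e) = 0 for every edge e. -/
/-!
Fix a root `ρ`. On a tree, sending a vertex `v ≠ ρ` to the first edge `e` of the path from `v` to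
`ρ` is a bijection from the non-root vertices to the edges, so summing `r v = s e + a v e` over
`v ≠ ρ` shows that `∑ v, r v - ∑ e, s e - r ρ` is the sum of the torsion parts `a v e` pointing
towards `ρ`. Averaging over `ρ` with the weights `w ρ`, which sum to `1`, writes the defect as a
positive combination of torsion parts, and each of them occurs: `a v s(v, u)` points towards `u`.
-/

open Finset

variable {V : Type*} [Fintype V] [DecidableEq V]

section StepToward

variable {α : Type*} {G : SimpleGraph α}

/-- The vertex following `v` on a chosen shortest walk from `v` to `ρ`, that is, the parent of `v`
when a tree is rooted at `ρ`. The root is its own parent. -/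
noncomputable def stepToward (hG : G.Connected) (ρ v : α) : α :=
  (hG.exists_walk_length_eq_dist v ρ).choose.snd

theorem adj_stepToward (hG : G.Connected) {ρ v : α} (hv : v ≠ ρ) :
    G.Adj v (stepToward hG ρ v) :=
  SimpleGraph.Walk.adj_snd (SimpleGraph.Walk.not_nil_of_ne hv)

theorem dist_stepToward_lt (hG : G.Connected) {ρ v : α} (hv : v ≠ ρ) :
    G.dist (stepToward hG ρ v) ρ < G.dist v ρ := by
  have hp := (hG.exists_walk_length_eq_dist v ρ).choose_spec
  set p := (hG.exists_walk_length_eq_dist v ρ).choose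
  calc G.dist (stepToward hG ρ v) ρ ≤ p.tail.length := G.dist_le p.tail
    _ < p.tail.length + 1 := Nat.lt_succ_self _
    _ = p.length := SimpleGraph.Walk.length_tail_add_one (SimpleGraph.Walk.not_nil_of_ne hv)
    _ = G.dist v ρ := hp

theorem stepToward_of_adj (hG : G.Connected) {ρ v : α} (h : G.Adj v ρ) :
    stepToward hG ρ v = ρ := by
  have hlt := dist_stepToward_lt hG h.ne
  rw [SimpleGraph.dist_eq_one_iff_adj.mpr h, Nat.lt_one_iff] at hlt
  exact hG.dist_eq_zero_iff.mp hlt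

theorem injOn_edge_stepToward (hG : G.Connected) (ρ : α) :
    Set.InjOn (fun v ↦ s(v, stepToward hG ρ v)) {ρ}ᶜ := by
  intro x hx y hy hxy
  rcases Sym2.eq_iff.mp hxy with ⟨hxy, -⟩ | ⟨hx_step, hstep_y⟩
  · exact hxy
  · have hlt_x := dist_stepToward_lt hG hx
    have hlt_y := dist_stepToward_lt hG hy
    rw [hstep_y] at hlt_x
    rw [← hx_step] at hlt_y
    exact absurd hlt_x hlt_y.asymm

variable [Fintype α] [DecidableEq α] {T : SimpleGraph α} [DecidableRel T.Adj]

theorem image_edge_stepToward (hT : T.IsTree) (ρ : α) :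
    (univ.erase ρ).image (fun v ↦ s(v, stepToward hT.connected ρ v)) = T.edgeFinset := by
  have hinj : Set.InjOn (fun v ↦ s(v, stepToward hT.connected ρ v)) (univ.erase ρ : Finset α) :=
    (injOn_edge_stepToward hT.connected ρ).mono fun v hv ↦ ne_of_mem_erase hv
  apply eq_of_subset_of_card_le
  · refine image_subset_iff.mpr fun v hv ↦ ?_
    exact SimpleGraph.mem_edgeFinset.mpr (adj_stepToward hT.connected (ne_of_mem_erase hv))
  · rw [card_image_of_injOn hinj, card_erase_of_mem (mem_univ ρ), card_univ, ← hT.card_edgeFinset,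
      Nat.add_sub_cancel]

theorem sum_edge_stepToward {M : Type*} [AddCommMonoid M] (hT : T.IsTree) (ρ : α)
    (f : Sym2 α → M) :
    ∑ v ∈ univ.erase ρ, f s(v, stepToward hT.connected ρ v) = ∑ e ∈ T.edgeFinset, f e := by
  rw [← image_edge_stepToward hT ρ, sum_image]
  exact (injOn_edge_stepToward hT.connected ρ).mono fun v hv ↦ ne_of_mem_erase hv

end StepToward

namespace DepthOneDatum

variable {α : Type*} [Fintype α]

/-- The sum, over all vertices `v ≠ ρ`, of the torsion part at `v` of the first edge on the way
from `v` to `ρ`. -/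
noncomputable def torsionToward [DecidableEq α] {G : SimpleGraph α} (D : DepthOneDatum G)
    (hG : G.Connected) (ρ : α) : ℕ :=
  ∑ v ∈ univ.erase ρ, D.a v s(v, stepToward hG ρ v)

theorem forall_torsionToward_eq_zero_iff_locFree [DecidableEq α] {G : SimpleGraph α}
    (D : DepthOneDatum G) (hG : G.Connected) : (∀ ρ, D.torsionToward hG ρ = 0) ↔ D.LocFree := by
  simp only [torsionToward, sum_eq_zero_iff, mem_erase, mem_univ, and_true]
  constructor
  · intro h e he v hv
    obtain ⟨u, rfl⟩ := Sym2.mem_iff_exists.mp hv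
    have hadj : G.Adj v u := he
    simpa only [stepToward_of_adj hG hadj] using h u v hadj.ne
  · intro h ρ v hv
    exact h _ (adj_stepToward hG hv) v (Sym2.mem_mk_left _ _)

variable {T : SimpleGraph α} [DecidableRel T.Adj]

theorem sum_r_eq_add_torsionToward [DecidableEq α] (D : DepthOneDatum T) (hT : T.IsTree)
    (ρ : α) :
    ∑ v, D.r v = D.r ρ + (∑ e ∈ T.edgeFinset, D.s e + D.torsionToward hT.connected ρ) := by
  rw [← add_sum_erase _ _ (mem_univ ρ), ← sum_edge_stepToward hT ρ, torsionToward,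
    ← sum_add_distrib]
  congr 1
  refine sum_congr rfl fun v hv ↦ ?_
  exact D.compat _ (adj_stepToward hT.connected (ne_of_mem_erase hv)) v (Sym2.mem_mk_left _ _)

theorem defect_one_sub_eq_sum_mul_torsionToward [DecidableEq α] (D : DepthOneDatum T)
    (hT : T.IsTree) {w : α → ℚ} (hwsum : ∑ v, w v = 1) :
    D.defect (fun v ↦ 1 - w v) = ∑ ρ, w ρ * D.torsionToward hT.connected ρ := by
  have htorsion (ρ : α) : (D.torsionToward hT.connected ρ : ℚ) =
      (∑ v, (D.r v : ℚ) - ∑ e ∈ T.edgeFinset, (D.s e : ℚ)) - D.r ρ := by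
    have hsum : ∑ v, (D.r v : ℚ) =
        D.r ρ + (∑ e ∈ T.edgeFinset, (D.s e : ℚ) + D.torsionToward hT.connected ρ) :=
      mod_cast D.sum_r_eq_add_torsionToward hT ρ
    linarith
  calc D.defect (fun v ↦ 1 - w v)
      = (∑ v, (D.r v : ℚ) - ∑ e ∈ T.edgeFinset, (D.s e : ℚ)) - ∑ ρ, w ρ * D.r ρ := by
        simp only [defect, mul_sub, mul_one, sum_sub_distrib, mul_comm (w _)]
        ring
    _ = ∑ ρ, w ρ * D.torsionToward hT.connected ρ := by
        simp only [htorsion, mul_sub _ _ (D.r _ : ℚ), sum_sub_distrib, ← sum_mul, hwsum, one_mul]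

theorem defect_one_sub_nonneg (D : DepthOneDatum T) (hT : T.IsTree) {w : α → ℚ}
    (hw : ∀ v, 0 ≤ w v) (hwsum : ∑ v, w v = 1) : 0 ≤ D.defect (fun v ↦ 1 - w v) := by
  classical
  rw [D.defect_one_sub_eq_sum_mul_torsionToward hT hwsum]
  exact sum_nonneg fun ρ _ ↦ mul_nonneg (hw ρ) (Nat.cast_nonneg _)

theorem defect_one_sub_eq_zero_iff_locFree (D : DepthOneDatum T) (hT : T.IsTree) {w : α → ℚ}
    (hw : ∀ v, 0 < w v) (hwsum : ∑ v, w v = 1) :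
    D.defect (fun v ↦ 1 - w v) = 0 ↔ D.LocFree := by
  classical
  have hnonneg (ρ : α) : 0 ≤ w ρ * D.torsionToward hT.connected ρ :=
    mul_nonneg (hw ρ).le (Nat.cast_nonneg _)
  rw [D.defect_one_sub_eq_sum_mul_torsionToward hT hwsum,
    ← D.forall_torsionToward_eq_zero_iff_locFree hT.connected,
    sum_eq_zero_iff_of_nonneg fun ρ _ ↦ hnonneg ρ]
  simp only [mem_univ, forall_const, mul_eq_zero, (hw _).ne', false_or, Nat.cast_eq_zero]

end DepthOneDatum

/-- on a tree `T` with all genera `0` (so `p_a = 0` and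
`λ v = 1 − w v`), every polarization `w` is numerically good: every depth-one datum
has nonnegative defect, zero iff locally free. -/
theorem stmt_15 (T : SimpleGraph V) [DecidableRel T.Adj]
    (hT : T.IsTree) (hγ : 2 ≤ Fintype.card V)
    (w : V → ℚ) (hw : ∀ v, 0 < w v ∧ w v < 1) (hwsum : ∑ v, w v = 1)
    (D : DepthOneDatum T) :
    0 ≤ D.defect (fun v => 1 - w v)
    ∧ (D.defect (fun v => 1 - w v) = 0 ↔ D.LocFree) :=
  ⟨D.defect_one_sub_nonneg hT (fun v ↦ (hw v).1.le) hwsum,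
    D.defect_one_sub_eq_zero_iff_locFree hT (fun v ↦ (hw v).1) hwsum⟩
end

section
/- Let T be a finite tree (connected acyclic simple graph) with vertex set V of size γ ≥ 2 and δ = γ − 1 edges, and let g : V → ℕ have ∑_{v∈V} g(v) = 1 (so exactly one vertex v₀ has g(v₀) = 1 and all others have genus 0; hence p_a = 1). Then for every w : V → ℚ with 0 < w(v) < 1 and ∑ w(v) = 1, setting λ(v) = 1 − g(v), there exists a depth-one datum (r,s,a,b) on T which is not locally free (i.e. a(e) ≠ 0 or b(e) ≠ 0 for some edge e) but has defect Δ = (∑_{v∈V} r(v)·λ(v)) − ∑_e s(e) = 0. In other words, no polarization w on T is numerically good. -/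
open Finset

variable {V : Type*} [Fintype V] [DecidableEq V]

/-!
The structure sheaf `O_B` of a subcurve has defect `Δ_w(O_B)`, and it fails to be locally free
exactly at the nodes where `B` meets its complement. For a single component `v` the defect is
`λ v`, which vanishes on the component of genus one, and connectedness gives a node on it.
-/

namespace DepthOneDatum

/-- The depth one datum of the structure sheaf `O_B` of the subcurve formed by the components
in `B`: rank one on `B`, free at the nodes interior to `B`, and torsion at the nodes where `B`
meets its complement. -/
def structureSheaf (G : SimpleGraph V) (B : Finset V) : DepthOneDatum G where
  r v := if v ∈ B then 1 else 0
  s e := if e ∈ B.sym2 then 1 else 0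
  a v e := if v ∈ B ∧ e ∉ B.sym2 then 1 else 0
  compat e _ v hv := by
    have hmem : e ∈ B.sym2 → v ∈ B := fun he => mem_sym2_iff.mp he v hv
    grind

variable (G : SimpleGraph V) [DecidableRel G.Adj]

theorem defect_structureSheaf (lam : V → ℚ) (B : Finset V) :
    (structureSheaf G B).defect lam = DeltaO G lam B := by
  simp [defect, structureSheaf, DeltaO, insideCount]

theorem locFree_structureSheaf_iff (B : Finset V) :
    (structureSheaf G B).LocFree ↔ crossCount G B = 0 := by
  simp only [LocFree, structureSheaf, crossCount, card_eq_zero, filter_eq_empty_iff,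
    SimpleGraph.mem_edgeFinset, mem_sym2_iff, mem_compl]
  grind

end DepthOneDatum

theorem notMem_sym2_singleton_of_mem_edgeSet {V : Type*} {G : SimpleGraph V} {e : Sym2 V}
    (he : e ∈ G.edgeSet) (v : V) : e ∉ ({v} : Finset V).sym2 := by
  rw [sym2_singleton, mem_singleton]
  rintro rfl
  exact G.not_isDiag_of_mem_edgeSet he (Sym2.diag_isDiag v)

section Singleton

variable (G : SimpleGraph V) [DecidableRel G.Adj]

theorem insideCount_singleton (v : V) : insideCount G {v} = 0 := by
  rw [insideCount, card_eq_zero, filter_eq_empty_iff]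
  exact fun e he => notMem_sym2_singleton_of_mem_edgeSet (G.mem_edgeFinset.mp he) v

theorem DeltaO_singleton (lam : V → ℚ) (v : V) : DeltaO G lam {v} = lam v := by
  simp [DeltaO, insideCount_singleton]

theorem crossCount_singleton (v : V) : crossCount G {v} = G.degree v := by
  rw [crossCount, ← G.card_incidenceFinset_eq_degree, G.incidenceFinset_eq_filter]
  congr 1
  refine filter_congr fun e he => ?_
  have he_not_inside := notMem_sym2_singleton_of_mem_edgeSet (G.mem_edgeFinset.mp he) v
  calc
    e ∉ ({v} : Finset V).sym2 ∧ e ∉ ({v} : Finset V)ᶜ.sym2 ↔ e ∉ ({v} : Finset V)ᶜ.sym2 :=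
      and_iff_right he_not_inside
    _ ↔ v ∈ e := by simp [mem_sym2_iff]

end Singleton

theorem exists_eq_one_of_sum_eq_one {ι : Type*} {s : Finset ι} {f : ι → ℕ}
    (hf : ∑ i ∈ s, f i = 1) : ∃ i ∈ s, f i = 1 := by
  obtain ⟨i, hi, hfi⟩ := exists_ne_zero_of_sum_ne_zero (hf.trans_ne one_ne_zero)
  have hle : f i ≤ 1 := hf ▸ single_le_sum_of_canonicallyOrdered hi
  exact ⟨i, hi, by lia⟩

theorem stmt_17_general (G : SimpleGraph V) [DecidableRel G.Adj] (lam : V → ℚ) (B : Finset V)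
    (hcross : crossCount G B ≠ 0) (hdelta : DeltaO G lam B = 0) :
    ∃ D : DepthOneDatum G, ¬ D.LocFree ∧ D.defect lam = 0 :=
  ⟨.structureSheaf G B, mt (DepthOneDatum.locFree_structureSheaf_iff G B).mp hcross,
    (DepthOneDatum.defect_structureSheaf G lam B).trans hdelta⟩

/-- on a tree `T` with total genus `1` (so `p_a = 1` and
`λ v = 1 − g v`), no polarization is numerically good: there is a depth-one datum
which is not locally free but has defect `0`. -/
theorem stmt_17 (T : SimpleGraph V) [DecidableRel T.Adj]
    (hT : T.IsTree) (hγ : 2 ≤ Fintype.card V)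
    (g : V → ℕ) (hg : ∑ v, g v = 1)
    (w : V → ℚ) (hw : ∀ v, 0 < w v ∧ w v < 1) (hwsum : ∑ v, w v = 1) :
    ∃ D : DepthOneDatum T,
      ¬ D.LocFree ∧ D.defect (fun v => 1 - (g v : ℚ)) = 0 := by
  obtain ⟨v, -, hv⟩ := exists_eq_one_of_sum_eq_one hg
  have : Nontrivial V := Fintype.one_lt_card_iff_nontrivial.mp hγ
  have hdeg : T.degree v ≠ 0 := (hT.connected.preconnected.degree_pos_of_nontrivial v).ne'
  exact stmt_17_general T _ {v} (by rwa [crossCount_singleton])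
    (by simp [DeltaO_singleton, hv])
end
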